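/- The augmented column E ←(μ̃)− Y_0 ←(∂_1)− Y_1 ←(∂_2)− Y_2 ← ⋯, where μ̃(a⊗(h_0⊗h_1)) = −a f(h_0^{(1)},h_1^{(1)}) # h_0^{(2)}h_1^{(2)}, is contractible as a complex of left E-modules with homotopy σ^{−1}_{s+1}(x) = (−1)^s x⊗1_H. Moreover, defining left E-linear maps σ^l recursively by σ^l_{r+l+1,s−l} = −Σ_{i=0}^{l−1} σ^0_{r+l+1,s−l}∘d^{l−i}_{r+i+1,s−i}∘σ^i_{r+i+1,s−i} (0 < l ≤ s, r ≥ −1), the family σ̄_0 = σ^0_{00}∘σ^{−1}_0 and σ̄_{n+1} = −Σ_{l=0}^{n+1} σ^l_{l,n−l+1}∘σ^{−1}_{n+1}∘μ_n + Σ_{r+s=n} Σ_{l=0}^{s} σ^l_{r+l+1,s−l} (n ≥ 0) is a contracting homotopy, by left E-linear maps, of the relative projective resolution E ←(−μ)− X_0 ←(d_1)− X_1 ← ⋯ of Theorem 1.1.1. -/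

import Mathlib

open TensorProduct DirectSum

set_option maxHeartbeats 1000000
set_option maxSynthPendingDepth 3
set_option synthInstance.maxHeartbeats 400000

noncomputable section

namespace HopfCrossed

variable (k : Type) [CommRing k]

def TpowCat (V : ModuleCat k) : ℕ → ModuleCat k
  | 0 => ModuleCat.of k k
  | n + 1 => ModuleCat.of k (V ⊗[k] (TpowCat V n))

abbrev Tpow (V : Type) [AddCommGroup V] [Module k V] (n : ℕ) : Type :=
  TpowCat k (ModuleCat.of k V) n

def tp {V : Type} [AddCommGroup V] [Module k V] : ∀ {n : ℕ}, (Fin n → V) → Tpow k V n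
  | 0, _ => (1 : k)
  | _ + 1, v => (v 0) ⊗ₜ[k] (tp fun i => v i.succ)

section Coalg
variable {H : Type} [AddCommGroup H] [Module k H]

def itComul [Coalgebra k H] : ∀ n : ℕ, H →ₗ[k] Tpow k H (n + 1)
  | 0 => (TensorProduct.rid k H).symm.toLinearMap
  | n + 1 =>
      (TensorProduct.map LinearMap.id (itComul n)) ∘ₗ (Coalgebra.comul (R := k))

def SRep [Coalgebra k H] (n : ℕ) (h : H) (N : ℕ) (u : Fin N → Fin (n + 1) → H) : Prop :=
  itComul k n h = ∑ i, tp k (u i)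

def iterAct {A : Type} [AddCommGroup A] [Module k A]
    (act : H →ₗ[k] A →ₗ[k] A) : ∀ {s : ℕ}, (Fin s → H) → A → A
  | 0, _, a => a
  | _ + 1, h, a => act (h 0) (iterAct act (fun i => h i.succ) a)

end Coalg

/-- A weak action of a Hopf algebra `H` on a `k`-algebra `A` (Blattner–Cohen–Montgomery,
Doi–Takeuchi), written `act h a = a^h`. -/
structure WeakAction (k A H : Type) [CommRing k] [Ring A] [Algebra k A] [Ring H] [HopfAlgebra k H] : Type where
  act : H →ₗ[k] A →ₗ[k] A
  act_mul : ∀ (h : H) (a b : A) (N : ℕ) (u : Fin N → Fin 2 → H), SRep k 1 h N u →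
    act h (a * b) = ∑ i, act (u i 0) a * act (u i 1) b
  act_one : ∀ h : H, act h 1 = Coalgebra.counit (R := k) h • (1 : A)
  one_act : ∀ a : A, act 1 a = a

variable {A H : Type} [Ring A] [Algebra k A] [Ring H] [HopfAlgebra k H]
variable {k}

/-- Normality of the cocycle `f`. -/
def IsNormal (f : H →ₗ[k] H →ₗ[k] A) : Prop :=
  ∀ h : H, f h 1 = Coalgebra.counit (R := k) h • (1 : A) ∧
    f 1 h = Coalgebra.counit (R := k) h • (1 : A)

/-- The cocycle condition
`f(l⁽¹⁾,m⁽¹⁾)^{h⁽¹⁾} f(h⁽²⁾, l⁽²⁾m⁽²⁾) = f(h⁽¹⁾,l⁽¹⁾) f(h⁽²⁾l⁽²⁾, m)`. -/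
def IsCocycle (W : WeakAction k A H) (f : H →ₗ[k] H →ₗ[k] A) : Prop :=
  ∀ (h l m : H) (N₁ N₂ N₃ : ℕ) (u : Fin N₁ → Fin 2 → H) (v : Fin N₂ → Fin 2 → H)
    (w : Fin N₃ → Fin 2 → H),
    SRep k 1 h N₁ u → SRep k 1 l N₂ v → SRep k 1 m N₃ w →
    (∑ i, ∑ j, ∑ p, W.act (u i 0) (f (v j 0) (w p 0)) * f (u i 1) (v j 1 * w p 1)) =
      ∑ i, ∑ j, f (u i 0) (v j 0) * f (u i 1 * v j 1) m

/-- The twisted module condition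
`(a^{l⁽¹⁾})^{h⁽¹⁾} f(h⁽²⁾,l⁽²⁾) = f(h⁽¹⁾,l⁽¹⁾) a^{h⁽²⁾l⁽²⁾}`. -/
def IsTwistedModule (W : WeakAction k A H) (f : H →ₗ[k] H →ₗ[k] A) : Prop :=
  ∀ (h l : H) (a : A) (N₁ N₂ : ℕ) (u : Fin N₁ → Fin 2 → H) (v : Fin N₂ → Fin 2 → H),
    SRep k 1 h N₁ u → SRep k 1 l N₂ v →
    (∑ i, ∑ j, W.act (u i 0) (W.act (v j 0) a) * f (u i 1) (v j 1)) =
      ∑ i, ∑ j, f (u i 0) (v j 0) * W.act (u i 1 * v j 1) a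

variable (k A H) in
/-- A crossed product `E = A #_f H` of `A` by `H`:  a ring `E` identified with `A ⊗ H`
as a `k`-module, whose multiplication is given by the crossed product formula
`(a # h)(b # l) = a b^{h⁽¹⁾} f(h⁽²⁾,l⁽¹⁾) # h⁽³⁾ l⁽²⁾`. -/
structure CrossedProduct (E : Type) [Ring E] [Algebra k E] extends WeakAction k A H where
  f : H →ₗ[k] H →ₗ[k] A
  ι : (A ⊗[k] H) ≃ₗ[k] E
  ι_one : ι (1 ⊗ₜ[k] 1) = 1
  ι_mul : ∀ (a b : A) (h l : H) (N M : ℕ) (u : Fin N → Fin 3 → H) (v : Fin M → Fin 2 → H),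
    SRep k 2 h N u → SRep k 1 l M v →
    ι (a ⊗ₜ[k] h) * ι (b ⊗ₜ[k] l) =
      ∑ i, ∑ j, ι ((a * act (u i 0) b * f (u i 1) (v j 0)) ⊗ₜ[k] (u i 2 * v j 1))
  f_normal : IsNormal f
  f_cocycle : IsCocycle toWeakAction f
  f_twisted : IsTwistedModule toWeakAction f

namespace CrossedProduct

variable {E : Type} [Ring E] [Algebra k E] (S : CrossedProduct k A H E)

/-- The canonical map `A → E`, `a ↦ a # 1`. -/
def aE : A →ₗ[k] E := S.ι.toLinearMap ∘ₗ (TensorProduct.mk k A H).flip 1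

/-- The canonical map `H → E`, `h ↦ 1 # h`. -/
def hE : H →ₗ[k] E := S.ι.toLinearMap ∘ₗ (TensorProduct.mk k A H) 1

end CrossedProduct


section Hochschild

variable (k) in
/-- For a `k`-algebra `B`, the submodule `k·1 ⊆ B`. -/
abbrev unitSub (B : Type) [Ring B] [Algebra k B] : Submodule k B :=
  LinearMap.range (Algebra.linearMap k B)

variable (k) in
/-- `B̄ = B/k`. -/
abbrev Qbar (B : Type) [Ring B] [Algebra k B] : Type := B ⧸ unitSub k B

variable (k) in
/-- The canonical projection `B → B̄`. -/
abbrev qbar (B : Type) [Ring B] [Algebra k B] : B →ₗ[k] Qbar k B :=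
  (unitSub k B).mkQ

/-- A `B`-bimodule structure (with commuting `k`-linear left and right actions)
on a `k`-module `M`. -/
structure Bimod (k B M : Type) [CommRing k] [Ring B] [Algebra k B]
    [AddCommGroup M] [Module k M] : Type where
  l : B →ₗ[k] M →ₗ[k] M
  r : B →ₗ[k] M →ₗ[k] M
  l_one : l 1 = LinearMap.id
  r_one : r 1 = LinearMap.id
  l_mul : ∀ x y : B, l (x * y) = l x ∘ₗ l y
  r_mul : ∀ x y : B, r (x * y) = r y ∘ₗ r x
  lr_comm : ∀ x y : B, l x ∘ₗ r y = r y ∘ₗ l x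

/-- Replace the `r`-tuple `a` by the `(r-1)`-tuple obtained by multiplying the
`i`-th and `(i+1)`-st entries. -/
def mulAt {A : Type} [Mul A] {r : ℕ} (a : Fin (r + 1) → A) (i : Fin r) (j : Fin r) : A :=
  if (j : ℕ) < (i : ℕ) then a j.castSucc
  else if (j : ℕ) = (i : ℕ) then a j.castSucc * a j.succ else a j.succ

variable (k) in
/-- The degree-`n` part `M ⊗ B̄^{⊗n}` of the normalized Hochschild chain complex. -/
abbrev HCh (B M : Type) [Ring B] [Algebra k B] [AddCommGroup M] [Module k M]
    (n : ℕ) : Type :=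
  M ⊗[k] Tpow k (Qbar k B) n

variable (k) in
/-- `IsHochschildD l r bd` says that `bd` is the differential of the normalized
Hochschild chain complex of `B` with coefficients in the bimodule `M` (with left
action `l` and right action `r`):
`b(m ⊗ x₁ ⊗ ⋯ ⊗ xₙ) = m x₁ ⊗ x₂ ⊗ ⋯ + ∑ (-1)^i m ⊗ ⋯ ⊗ xᵢxᵢ₊₁ ⊗ ⋯ + (-1)^n xₙ m ⊗ x₁ ⊗ ⋯ ⊗ xₙ₋₁`. -/
def IsHochschildD {B M : Type} [Ring B] [Algebra k B] [AddCommGroup M] [Module k M]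
    (l r : B →ₗ[k] M →ₗ[k] M)
    (bd : ∀ n : ℕ, HCh k B M (n + 1) →ₗ[k] HCh k B M n) : Prop :=
  ∀ (n : ℕ) (m : M) (x : Fin (n + 1) → B),
    bd n (m ⊗ₜ[k] tp k (fun i => qbar k B (x i))) =
      r (x 0) m ⊗ₜ[k] tp k (fun i : Fin n => qbar k B (x i.succ))
      + (∑ i : Fin n, ((-1 : ℤ) ^ ((i : ℕ) + 1)) •
          (m ⊗ₜ[k] tp k (fun j => qbar k B (mulAt x i j))))
      + ((-1 : ℤ) ^ (n + 1)) •
          (l (x (Fin.last n)) m ⊗ₜ[k] tp k (fun i : Fin n => qbar k B (x i.castSucc)))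

variable (k) in
/-- The homology of a (not necessarily everywhere-defined) chain complex
`⋯ → C (n+1) → C n → ⋯ → C 0`; in degree `n+1` it is `ker (d n) / im (d (n+1))`, and in
degree `0` it is `C 0 / im (d 0)`. -/
def Hml {C : ℕ → Type} [∀ n, AddCommGroup (C n)] [∀ n, Module k (C n)]
    (d : ∀ n : ℕ, C (n + 1) →ₗ[k] C n) : ℕ → Type
  | 0 => C 0 ⧸ LinearMap.range (d 0)
  | n + 1 => LinearMap.ker (d n) ⧸
      (LinearMap.range (d (n + 1))).comap (LinearMap.ker (d n)).subtype

instance {C : ℕ → Type} [∀ n, AddCommGroup (C n)] [∀ n, Module k (C n)]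
    (d : ∀ n : ℕ, C (n + 1) →ₗ[k] C n) : ∀ n, AddCommGroup (Hml k d n)
  | 0 => inferInstanceAs (AddCommGroup (C 0 ⧸ LinearMap.range (d 0)))
  | n + 1 => inferInstanceAs (AddCommGroup (LinearMap.ker (d n) ⧸
      (LinearMap.range (d (n + 1))).comap (LinearMap.ker (d n)).subtype))

instance {C : ℕ → Type} [∀ n, AddCommGroup (C n)] [∀ n, Module k (C n)]
    (d : ∀ n : ℕ, C (n + 1) →ₗ[k] C n) : ∀ n, Module k (Hml k d n)
  | 0 => inferInstanceAs (Module k (C 0 ⧸ LinearMap.range (d 0)))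
  | n + 1 => inferInstanceAs (Module k (LinearMap.ker (d n) ⧸
      (LinearMap.range (d (n + 1))).comap (LinearMap.ker (d n)).subtype))

end Hochschild

section Conv

variable {A H : Type} [Ring A] [Algebra k A] [Ring H] [HopfAlgebra k H]

/-- `IsConvInverse f g` : `g` is the convolution inverse of `f` in the convolution
algebra `Hom_k(H ⊗ H, A)`, i.e. `f * g = g * f = ε ⊗ ε · 1_A`. -/
def IsConvInverse (f g : H →ₗ[k] H →ₗ[k] A) : Prop :=
  ∀ (h l : H) (N M' : ℕ) (u : Fin N → Fin 2 → H) (v : Fin M' → Fin 2 → H),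
    SRep k 1 h N u → SRep k 1 l M' v →
    (∑ i, ∑ j, f (u i 0) (v j 0) * g (u i 1) (v j 1)) =
        (Coalgebra.counit (R := k) h * Coalgebra.counit (R := k) l) • (1 : A) ∧
    (∑ i, ∑ j, g (u i 0) (v j 0) * f (u i 1) (v j 1)) =
        (Coalgebra.counit (R := k) h * Coalgebra.counit (R := k) l) • (1 : A)

variable {E : Type} [Ring E] [Algebra k E]

/-- The elementary term `f⁻¹(S(y), z) # S(x)` appearing in the formula for the
convolution inverse `(1 # h)⁻¹ = f⁻¹(S(h⁽²⁾), h⁽³⁾) # S(h⁽¹⁾)`. -/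
def ginv (S : CrossedProduct k A H E) (finv : H →ₗ[k] H →ₗ[k] A) (x y z : H) : E :=
  S.ι ((finv (HopfAlgebra.antipode (R := k) y) z) ⊗ₜ[k] HopfAlgebra.antipode (R := k) x)

end Conv

section Bar

variable {H : Type} [Ring H] [HopfAlgebra k H]

variable (k) in
/-- The degree-`s` part `H̄^{⊗s} ⊗ N` of the normalized bar complex computing
`H_*(H, N) = Tor_*^H(k, N)`, i.e. `(H̄^* ⊗ H, d_*) ⊗_H N`. -/
abbrev BarCh (N : Type) [AddCommGroup N] [Module k N] (s : ℕ) : Type :=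
  Tpow k (Qbar k H) s ⊗[k] N

variable (k) in
/-- `IsBarD act d` : `d` is the differential of the normalized bar complex computing the
homology `H_*(H, N)` of `H` with coefficients in the left `H`-module `N` (action `act`). -/
def IsBarD {N : Type} [AddCommGroup N] [Module k N] (act : H →ₗ[k] N →ₗ[k] N)
    (d : ∀ s : ℕ, BarCh k (H := H) N (s + 1) →ₗ[k] BarCh k (H := H) N s) : Prop :=
  ∀ (s : ℕ) (h : Fin (s + 1) → H) (n : N),
    d s (tp k (fun i => qbar k H (h i)) ⊗ₜ[k] n) =
      Coalgebra.counit (R := k) (h 0) •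
          (tp k (fun i : Fin s => qbar k H (h i.succ)) ⊗ₜ[k] n)
      + (∑ i : Fin s, ((-1 : ℤ) ^ ((i : ℕ) + 1)) •
          (tp k (fun j => qbar k H (mulAt h i j)) ⊗ₜ[k] n))
      + ((-1 : ℤ) ^ (s + 1)) •
          (tp k (fun i : Fin s => qbar k H (h i.castSucc)) ⊗ₜ[k] act (h (Fin.last s)) n)

end Bar

section Sep

variable {A : Type} [Ring A] [Algebra k A]

variable (k A) in
/-- `A` is a separable `k`-algebra: the multiplication map `A ⊗ A → A` admits an
`A`-bimodule splitting (equivalently, `A` is projective as an `A ⊗ Aᵒᵖ`-module). -/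
def IsSeparableAlg : Prop :=
  ∃ s : A →ₗ[k] A ⊗[k] A,
    (LinearMap.mul' k A) ∘ₗ s = LinearMap.id ∧
    ∀ (a b x : A), s (a * x * b) =
      TensorProduct.map (LinearMap.mulLeft k a) (LinearMap.mulRight k b) (s x)

end Sep


section Resolution

variable (k A H E : Type) [CommRing k] [Ring A] [Algebra k A] [Ring H] [HopfAlgebra k H]
  [Ring E] [Algebra k E]

/-- The `E`-bimodule `X_{rs} = E ⊗ H̄^{⊗s} ⊗ Ā^{⊗r} ⊗ E`. -/
abbrev Xc (r s : ℕ) : Type :=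
  E ⊗[k] (Tpow k (Qbar k H) s ⊗[k] (Tpow k (Qbar k A) r ⊗[k] E))

/-- The `E`-bimodule `Y_s = E ⊗ H̄^{⊗s} ⊗ H`. -/
abbrev Yc (s : ℕ) : Type := E ⊗[k] (Tpow k (Qbar k H) s ⊗[k] H)

variable {k A H E}

/-- The generator `e ⊗ h̄₁ ⊗ ⋯ ⊗ h̄ₛ ⊗ ā₁ ⊗ ⋯ ⊗ āᵣ ⊗ e'` of `X_{rs}`. -/
def xgen (e : E) {s r : ℕ} (hs : Fin s → H) (as : Fin r → A) (e' : E) : Xc k A H E r s :=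
  e ⊗ₜ[k] (tp k (fun i => qbar k H (hs i)) ⊗ₜ[k] (tp k (fun i => qbar k A (as i)) ⊗ₜ[k] e'))

/-- The generator `e ⊗ h̄₁ ⊗ ⋯ ⊗ h̄ₛ ⊗ h` of `Y_s`. -/
def ygen (e : E) {s : ℕ} (hs : Fin s → H) (h : H) : Yc k H E s :=
  e ⊗ₜ[k] (tp k (fun i => qbar k H (hs i)) ⊗ₜ[k] h)

/-- Left multiplication by `e ∈ E` on `X_{rs}`. -/
def lX (e : E) {r s : ℕ} : Xc k A H E r s →ₗ[k] Xc k A H E r s :=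
  TensorProduct.map (LinearMap.mulLeft k e) LinearMap.id

/-- Right multiplication by `e ∈ E` on `X_{rs}`. -/
def rX (e : E) {r s : ℕ} : Xc k A H E r s →ₗ[k] Xc k A H E r s :=
  TensorProduct.map LinearMap.id (TensorProduct.map LinearMap.id
    (TensorProduct.map LinearMap.id (LinearMap.mulRight k e)))

/-- Transport along equalities of indices. -/
def xcast {r r' s s' : ℕ} (hr : r = r') (hs : s = s') :
    Xc k A H E r s →ₗ[k] Xc k A H E r' s' := by
  subst hr; subst hs; exact LinearMap.id

end Resolution

section ResData

variable {k A H E : Type} [CommRing k] [Ring A] [Algebra k A] [Ring H] [HopfAlgebra k H]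
  [Ring E] [Algebra k E]

variable (k A H E) in
/-- The resolution `(X_*, d_*)` of the crossed product `E = A #_f H` of Section 1 of
the paper: the maps `μ_s`, `∂_s`, `σ⁰`, and the (higher) differentials `d^l_{rs}`
(`d⁰ = dl 0`), together with all of their defining equations.  Here
`dl l r s : X_{rs} → X_{r+l-1, s-l}`. -/
structure ResData (S : CrossedProduct k A H E) : Type where
  mu : ∀ s : ℕ, Xc k A H E 0 s →ₗ[k] Yc k H E s
  del : ∀ s : ℕ, Yc k H E (s + 1) →ₗ[k] Yc k H E s
  sig0 : ∀ s : ℕ, Yc k H E s →ₗ[k] Xc k A H E 0 s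
  sig : ∀ r s : ℕ, Xc k A H E r s →ₗ[k] Xc k A H E (r + 1) s
  dl : ∀ l r s : ℕ, Xc k A H E r s →ₗ[k] Xc k A H E (r + l - 1) (s - l)
  /-- `μ_s(a₀ ⊗ 𝐡_{0s} ⊗ a₁ ⊗ h_{s+1}) = a₀ a₁^{𝐡_{0s}⁽¹⁾} ⊗ 𝐡_{0s}⁽²⁾ ⊗ h_{s+1}`. -/
  mu_eq : ∀ (s : ℕ) (a₀ : A) (h₀ : H) (hs : Fin s → H) (b : A) (h' : H)
    (Nv : Fin (s + 1) → ℕ) (v : ∀ i, Fin (Nv i) → Fin 2 → H),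
    (∀ i, SRep k 1 ((Fin.cons h₀ hs : Fin (s + 1) → H) i) (Nv i) (v i)) →
    mu s (xgen (S.ι (a₀ ⊗ₜ[k] h₀)) hs (fun i : Fin 0 => i.elim0) (S.ι (b ⊗ₜ[k] h'))) =
      ∑ c : (∀ i, Fin (Nv i)),
        ygen (S.ι ((a₀ * iterAct k S.act (fun i => v i (c i) 0) b) ⊗ₜ[k] (v 0 (c 0) 1)))
          (fun i : Fin s => v i.succ (c i.succ) 1) h'
  /-- `d⁰_{rs}` is the Hochschild-type boundary in the `A`-direction. -/
  d0_eq : ∀ (r s : ℕ) (a₀ : A) (h₀ : H) (hs : Fin s → H) (as : Fin (r + 1) → A)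
    (b : A) (h' : H) (Nv : Fin (s + 1) → ℕ) (v : ∀ i, Fin (Nv i) → Fin 2 → H),
    (∀ i, SRep k 1 ((Fin.cons h₀ hs : Fin (s + 1) → H) i) (Nv i) (v i)) →
    dl 0 (r + 1) s (xgen (S.ι (a₀ ⊗ₜ[k] h₀)) hs as (S.ι (b ⊗ₜ[k] h'))) =
      (∑ c : (∀ i, Fin (Nv i)),
        xgen (S.ι ((a₀ * iterAct k S.act (fun i => v i (c i) 0) (as 0)) ⊗ₜ[k] (v 0 (c 0) 1)))
          (fun i : Fin s => v i.succ (c i.succ) 1)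
          (fun i : Fin r => as i.succ) (S.ι (b ⊗ₜ[k] h')))
      + (∑ i : Fin r, ((-1 : ℤ) ^ ((i : ℕ) + 1)) •
          xgen (S.ι (a₀ ⊗ₜ[k] h₀)) hs (mulAt as i) (S.ι (b ⊗ₜ[k] h')))
      + ((-1 : ℤ) ^ (r + 1)) •
          xgen (S.ι (a₀ ⊗ₜ[k] h₀)) hs (fun i : Fin r => as i.castSucc)
            (S.ι ((as (Fin.last r) * b) ⊗ₜ[k] h'))
  /-- `∂_s(a ⊗ 𝐡) = ∑ᵢ (-1)^{i+1} a f(hᵢ⁽¹⁾, hᵢ₊₁⁽¹⁾)^{𝐡_{0,i-1}⁽¹⁾} ⊗ 𝐡_{0,i-1}⁽²⁾ ⊗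
  hᵢ⁽²⁾hᵢ₊₁⁽²⁾ ⊗ 𝐡_{i+2,s+1}`. -/
  del_eq : ∀ (s : ℕ) (a : A) (h₀ : H) (hs : Fin (s + 1) → H) (h' : H)
    (Nv : Fin (s + 3) → ℕ) (v : ∀ i, Fin (Nv i) → Fin 2 → H),
    (∀ i, SRep k 1 ((Fin.cons h₀ (Fin.snoc hs h') : Fin (s + 3) → H) i) (Nv i) (v i)) →
    del s (ygen (S.ι (a ⊗ₜ[k] h₀)) hs h') =
      ∑ i : Fin (s + 2), ((-1 : ℤ) ^ ((i : ℕ) + 1)) •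
        (∑ c : (∀ j : Fin ((i : ℕ) + 2),
            Fin (Nv ⟨(j : ℕ), by have := j.isLt; have := i.isLt; omega⟩)),
          ygen
            (S.ι ((a * iterAct k S.act
                (fun j : Fin (i : ℕ) =>
                  v ⟨(j : ℕ), by have := j.isLt; have := i.isLt; omega⟩
                    (c ⟨(j : ℕ), by have := j.isLt; have := i.isLt; omega⟩) 0)
                (S.f (v ⟨(i : ℕ), by have := i.isLt; omega⟩
                        (c ⟨(i : ℕ), by omega⟩) 0)
                     (v ⟨(i : ℕ) + 1, by have := i.isLt; omega⟩
                        (c ⟨(i : ℕ) + 1, by omega⟩) 0))) ⊗ₜ[k]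
              (if (i : ℕ) = 0 then
                  (v ⟨0, by omega⟩ (c ⟨0, by omega⟩) 1) * (v ⟨1, by omega⟩ (c ⟨1, by omega⟩) 1)
                else v ⟨0, by omega⟩ (c ⟨0, by omega⟩) 1)))
            (fun p : Fin s =>
              if hp : (p : ℕ) + 1 < (i : ℕ) then
                v ⟨(p : ℕ) + 1, by have := p.isLt; have := i.isLt; omega⟩
                  (c ⟨(p : ℕ) + 1, by omega⟩) 1
              else if hp' : (p : ℕ) + 1 = (i : ℕ) then
                (v ⟨(p : ℕ) + 1, by have := p.isLt; omega⟩ (c ⟨(p : ℕ) + 1, by omega⟩) 1) *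
                  (v ⟨(p : ℕ) + 2, by have := p.isLt; have := i.isLt; omega⟩
                    (c ⟨(p : ℕ) + 2, by omega⟩) 1)
              else (Fin.cons h₀ (Fin.snoc hs h') : Fin (s + 3) → H) ⟨(p : ℕ) + 2, by have := p.isLt; omega⟩)
            (if hi : (i : ℕ) = s + 1 then
                (v ⟨s + 1, by omega⟩ (c ⟨s + 1, by omega⟩) 1) *
                  (v ⟨s + 2, by omega⟩ (c ⟨s + 2, by omega⟩) 1)
              else (Fin.cons h₀ (Fin.snoc hs h') : Fin (s + 3) → H) ⟨s + 2, by omega⟩))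
  /-- `σ⁰_{0,s}(a₀ ⊗ 𝐡 ⊗ h_{s+1}) = a₀ ⊗ 𝐡 ⊗ 1 # h_{s+1}`. -/
  sig0_eq : ∀ (s : ℕ) (e : E) (hs : Fin s → H) (h : H),
    sig0 s (ygen e hs h) = xgen e hs (fun i : Fin 0 => i.elim0) (S.hE h)
  /-- `σ⁰_{r+1,s}(a₀ ⊗ 𝐡 ⊗ 𝐚 ⊗ a # h) = (-1)^{r+1} a₀ ⊗ 𝐡 ⊗ 𝐚 ⊗ ā ⊗ 1 # h`. -/
  sig_eq : ∀ (r s : ℕ) (e : E) (hs : Fin s → H) (as : Fin r → A) (b : A) (h' : H),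
    sig r s (xgen e hs as (S.ι (b ⊗ₜ[k] h'))) =
      ((-1 : ℤ) ^ (r + 1)) • xgen e hs (Fin.snoc as b) (S.hE h')
  /-- `d¹_{0s} = -σ⁰ ∘ ∂ ∘ μ` on `k ⊗ H̄^s ⊗ k`. -/
  dl_one_zero : ∀ (s : ℕ) (hs : Fin (s + 1) → H),
    dl 1 0 (s + 1) (xgen (1 : E) hs (fun i : Fin 0 => i.elim0) (1 : E)) =
      - sig0 s (del s (mu (s + 1) (xgen (1 : E) hs (fun i : Fin 0 => i.elim0) (1 : E))))
  /-- `d^l_{0s} = -∑_{j=1}^{l-1} σ⁰ ∘ d^{l-j} ∘ d^j` on `k ⊗ H̄^s ⊗ k`, for `1 < l ≤ s`. -/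
  dl_zero : ∀ (l s : ℕ) (hl : 2 ≤ l) (hls : l ≤ s) (hs : Fin s → H),
    dl l 0 s (xgen (1 : E) hs (fun i : Fin 0 => i.elim0) (1 : E)) =
      - ∑ j : Fin (l - 1),
        xcast (show (l - 2) + 1 = 0 + l - 1 by omega) rfl
          (sig (l - 2) (s - l)
            (xcast
              (show (j : ℕ) + (l - ((j : ℕ) + 1)) - 1 = l - 2 by
                have := j.isLt; omega)
              (show (s - ((j : ℕ) + 1)) - (l - ((j : ℕ) + 1)) = s - l by
                have := j.isLt; omega)
              (dl (l - ((j : ℕ) + 1)) ((j : ℕ)) (s - ((j : ℕ) + 1))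
                (xcast (show 0 + ((j : ℕ) + 1) - 1 = (j : ℕ) by omega) rfl
                  (dl ((j : ℕ) + 1) 0 s
                    (xgen (1 : E) hs (fun i : Fin 0 => i.elim0) (1 : E)))))))
  /-- `d^l_{rs} = -∑_{j=0}^{l-1} σ⁰ ∘ d^{l-j} ∘ d^j` on `k ⊗ H̄^s ⊗ Ā^r ⊗ k`, for `r > 0`,
  `1 ≤ l ≤ s`. -/
  dl_succ : ∀ (l r s : ℕ) (hl : 1 ≤ l) (hls : l ≤ s) (hs : Fin s → H) (as : Fin (r + 1) → A),
    dl l (r + 1) s (xgen (1 : E) hs as (1 : E)) =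
      - ∑ j : Fin l,
        xcast (show (r + l - 1) + 1 = (r + 1) + l - 1 by omega) rfl
          (sig (r + l - 1) (s - l)
            (xcast
              (show (r + (j : ℕ)) + (l - (j : ℕ)) - 1 = r + l - 1 by
                have := j.isLt; omega)
              (show (s - (j : ℕ)) - (l - (j : ℕ)) = s - l by
                have := j.isLt; omega)
              (dl (l - (j : ℕ)) (r + (j : ℕ)) (s - (j : ℕ))
                (xcast (show (r + 1) + (j : ℕ) - 1 = r + (j : ℕ) by omega) rfl
                  (dl (j : ℕ) (r + 1) s (xgen (1 : E) hs as (1 : E)))))))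
  /-- Each `d^l_{rs}` is a map of `E`-bimodules. -/
  dl_lmul : ∀ (l r s : ℕ) (e : E), dl l r s ∘ₗ lX e = lX e ∘ₗ dl l r s
  dl_rmul : ∀ (l r s : ℕ) (e : E), dl l r s ∘ₗ rX e = rX e ∘ₗ dl l r s

end ResData

section Xtot

variable {k A H E : Type} [CommRing k] [Ring A] [Algebra k A] [Ring H] [HopfAlgebra k H]
  [Ring E] [Algebra k E]

variable (k A H E) in
/-- The total module `X_n = ⊕_{r+s=n} X_{rs}`. -/
abbrev XT (n : ℕ) : Type :=
  ⨁ (s : Fin (n + 1)), Xc k A H E (n - (s : ℕ)) (s : ℕ)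

/-- The total differential `d_n = ∑_{r+s=n, r+l>0} ∑_{l=0}^{s} d^l_{rs}`. -/
noncomputable def dT {S : CrossedProduct k A H E} (R : ResData k A H E S) (n : ℕ) :
    XT k A H E (n + 1) →ₗ[k] XT k A H E n :=
  DirectSum.toModule k (Fin (n + 2)) (XT k A H E n) (fun s =>
    ∑ l : Fin ((s : ℕ) + 1),
      if h : 0 < (n + 1 - (s : ℕ)) + (l : ℕ) then
        (DirectSum.lof k (Fin (n + 1)) (fun s' : Fin (n + 1) => Xc k A H E (n - (s' : ℕ)) (s' : ℕ))
            ⟨(s : ℕ) - (l : ℕ), by have := s.isLt; have := l.isLt; omega⟩) ∘ₗ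
          xcast
            (show (n + 1 - (s : ℕ)) + (l : ℕ) - 1 = n - ((s : ℕ) - (l : ℕ)) by
              have := s.isLt; have := l.isLt; omega)
            rfl ∘ₗ
          R.dl (l : ℕ) (n + 1 - (s : ℕ)) (s : ℕ)
      else 0)

/-- Left multiplication by `e ∈ E` on `X_n`. -/
noncomputable def lT (e : E) (n : ℕ) : XT k A H E n →ₗ[k] XT k A H E n :=
  DirectSum.toModule k (Fin (n + 1)) (XT k A H E n) (fun s =>
    (DirectSum.lof k (Fin (n + 1)) (fun s' : Fin (n + 1) => Xc k A H E (n - (s' : ℕ)) (s' : ℕ)) s)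
      ∘ₗ lX e)

/-- Right multiplication by `e ∈ E` on `X_n`. -/
noncomputable def rT (e : E) (n : ℕ) : XT k A H E n →ₗ[k] XT k A H E n :=
  DirectSum.toModule k (Fin (n + 1)) (XT k A H E n) (fun s =>
    (DirectSum.lof k (Fin (n + 1)) (fun s' : Fin (n + 1) => Xc k A H E (n - (s' : ℕ)) (s' : ℕ)) s)
      ∘ₗ rX e)

/-- The augmentation `X_0 → E` induced by a map `μ : X_{00} → E`. -/
noncomputable def multT (mult : Xc k A H E 0 0 →ₗ[k] E) : XT k A H E 0 →ₗ[k] E :=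
  DirectSum.toModule k (Fin 1) E (fun s =>
    mult ∘ₗ xcast (show 0 - (s : ℕ) = 0 by have := s.isLt; omega)
      (show (s : ℕ) = 0 by have := s.isLt; omega))

end Xtot

section Statement2

variable {k A H E : Type} [CommRing k] [Ring A] [Algebra k A] [Ring H] [HopfAlgebra k H]
  [Ring E] [Algebra k E]

/-- Left multiplication by `e ∈ E` on `Y_s`. -/
noncomputable def lY (e : E) {s : ℕ} : Yc k H E s →ₗ[k] Yc k H E s :=
  TensorProduct.map (LinearMap.mulLeft k e) LinearMap.id

/-- The map `μ'_n : X_n → Y_n` which is `μ_n` on `X_{0n}` and `0` on `X_{r,n-r}`, `r > 0`. -/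
noncomputable def muT {S : CrossedProduct k A H E} (R : ResData k A H E S) (n : ℕ) :
    XT k A H E n →ₗ[k] Yc k H E n :=
  DirectSum.toModule k (Fin (n + 1)) (Yc k H E n) (fun s =>
    if h : (s : ℕ) = n then
      R.mu n ∘ₗ xcast (show n - (s : ℕ) = 0 by omega) h
    else 0)

/-- `σ̄₀ = σ⁰₀₀ ∘ σ⁻¹₀`. -/
noncomputable def sbar0 {S : CrossedProduct k A H E} (R : ResData k A H E S)
    (σm : E →ₗ[k] Yc k H E 0) : E →ₗ[k] XT k A H E 0 :=
  (DirectSum.lof k (Fin 1) (fun s' : Fin 1 => Xc k A H E (0 - (s' : ℕ)) (s' : ℕ)) 0) ∘ₗ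
    R.sig0 0 ∘ₗ σm

/-- `σ̄_{n+1} = -∑_{l=0}^{n+1} σ^l_{l,n-l+1} ∘ σ⁻¹_{n+1} ∘ μ_n + ∑_{r+s=n} ∑_{l=0}^s
σ^l_{r+l+1,s-l}`. -/
noncomputable def sbar {S : CrossedProduct k A H E} (R : ResData k A H E S)
    (slY : ∀ l s : ℕ, Yc k H E s →ₗ[k] Xc k A H E l (s - l))
    (slX : ∀ l r s : ℕ, Xc k A H E r s →ₗ[k] Xc k A H E (r + l + 1) (s - l))
    (sY : ∀ s : ℕ, Yc k H E s →ₗ[k] Yc k H E (s + 1)) (n : ℕ) :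
    XT k A H E n →ₗ[k] XT k A H E (n + 1) :=
  - ((∑ l : Fin (n + 2),
      (DirectSum.lof k (Fin (n + 2)) (fun s' : Fin (n + 2) => Xc k A H E (n + 1 - (s' : ℕ)) (s' : ℕ))
          ⟨n + 1 - (l : ℕ), by omega⟩) ∘ₗ
        xcast (show (l : ℕ) = n + 1 - (n + 1 - (l : ℕ)) by have := l.isLt; omega) rfl ∘ₗ
        slY (l : ℕ) (n + 1)) ∘ₗ sY n ∘ₗ muT R n)
  + DirectSum.toModule k (Fin (n + 1)) (XT k A H E (n + 1)) (fun s =>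
      ∑ l : Fin ((s : ℕ) + 1),
        (DirectSum.lof k (Fin (n + 2)) (fun s' : Fin (n + 2) => Xc k A H E (n + 1 - (s' : ℕ)) (s' : ℕ))
            ⟨(s : ℕ) - (l : ℕ), by have := s.isLt; have := l.isLt; omega⟩) ∘ₗ
          xcast
            (show (n - (s : ℕ)) + (l : ℕ) + 1 = n + 1 - ((s : ℕ) - (l : ℕ)) by
              have := s.isLt; have := l.isLt; omega)
            rfl ∘ₗ
          slX (l : ℕ) (n - (s : ℕ)) (s : ℕ))


end Statement2

/-! Over `A`, the module `E` is free on `1 # H`, and the column `Y` is a quotient of the bar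
resolution of `E` relative to `A`, so that `x ↦ ± x ⊗ 1` contracts it once it is augmented. Each row
`X_{*s}`, augmented by `Y_s`, is contracted by `σ⁰`. On the sum of all the `X_{rs}` and `Y_s` the
differential is `d⁰ + D¹`, where `d⁰` is the differential of the augmented rows and `D¹` lowers `s`;
the recursion that defines the `d^l` forces `(d⁰ + D¹)² = 0`. The sum `σ` of the `σ^l` satisfies
`σ = σ⁰ - σ⁰ D¹ σ`, and by the perturbation lemma it contracts `d⁰ + D¹`. As the augmented column
is itself contractible, the total complex of the `X_{rs}` embeds into this sum by
`z ↦ z - σ⁻¹ μ z`, and the contraction `σ` induces `σ̄` on it. -/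

section TensorPowers

variable {k : Type} [CommRing k] {V : Type} [AddCommGroup V] [Module k V]

variable (k V) in
/-- The identification `V ⊗ V^{⊗n} = V^{⊗(n+1)}` that holds by the recursive definition of the
tensor powers. -/
def tpowCons (n : ℕ) : (V ⊗[k] Tpow k V n) ≃ₗ[k] Tpow k V (n + 1) := LinearEquiv.refl k _

variable (k V) in
/-- The identification `k = V^{⊗0}` that holds by the recursive definition of the tensor powers. -/
def tpowNil : k ≃ₗ[k] Tpow k V 0 := LinearEquiv.refl k _

theorem tp_zero (v : Fin 0 → V) : tp k v = tpowNil k V 1 := rfl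

theorem tp_succ {n : ℕ} (v : Fin (n + 1) → V) :
    tp k v = tpowCons k V n (v 0 ⊗ₜ[k] tp k (fun i => v i.succ)) := rfl

theorem tp_cons {n : ℕ} (x : V) (v : Fin n → V) :
    tp k (Fin.cons x v : Fin (n + 1) → V) = tpowCons k V n (x ⊗ₜ[k] tp k v) := rfl

theorem tpow_zero_hom_ext {M : Type*} [AddCommGroup M] [Module k M] {f g : Tpow k V 0 →ₗ[k] M}
    (h : f (tpowNil k V 1) = g (tpowNil k V 1)) : f = g := by
  refine (LinearMap.cancel_right (tpowNil k V).surjective).1 (LinearMap.ext_ring ?_)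
  exact h

theorem tpow_succ_hom_ext {n : ℕ} {M : Type*} [AddCommGroup M] [Module k M]
    {f g : Tpow k V (n + 1) →ₗ[k] M}
    (h : f ∘ₗ (tpowCons k V n).toLinearMap = g ∘ₗ (tpowCons k V n).toLinearMap) : f = g :=
  (LinearMap.cancel_right (tpowCons k V n).surjective).1 h

theorem tpow_hom_ext {n : ℕ} {M : Type*} [AddCommGroup M] [Module k M] {f g : Tpow k V n →ₗ[k] M}
    (h : ∀ v : Fin n → V, f (tp k v) = g (tp k v)) : f = g := by
  induction n generalizing M with
  | zero => exact tpow_zero_hom_ext (h Fin.elim0)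
  | succ n ih =>
    refine tpow_succ_hom_ext (TensorProduct.ext (LinearMap.ext fun x => ih fun v => ?_))
    exact h (Fin.cons x v)

theorem exists_eq_sum_tp {n : ℕ} (t : Tpow k V (n + 1)) :
    ∃ (N : ℕ) (u : Fin N → Fin (n + 1) → V), t = ∑ i, tp k (u i) := by
  obtain ⟨t, rfl⟩ := (tpowCons k V n).surjective t
  induction t with
  | zero => exact ⟨0, fun i => i.elim0, by simp⟩
  | add x y hx hy =>
    obtain ⟨N, u, hu⟩ := hx
    obtain ⟨N', u', hu'⟩ := hy
    refine ⟨N + N', Fin.append u u', ?_⟩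
    rw [map_add, hu, hu', Fin.sum_univ_add]
    simp
  | tmul x w =>
    cases n with
    | zero =>
      obtain ⟨c, rfl⟩ := (tpowNil k V).surjective w
      refine ⟨1, fun _ _ => c • x, ?_⟩
      have hc : tpowNil k V c = c • tpowNil k V 1 := by rw [← map_smul, smul_eq_mul, mul_one]
      rw [Fin.sum_univ_one, tp_succ, tp_zero, hc, TensorProduct.tmul_smul, TensorProduct.smul_tmul']
    | succ n =>
      obtain ⟨N, u, rfl⟩ := exists_eq_sum_tp w
      exact ⟨N, fun i => Fin.cons x (u i), by simp only [tp_cons, TensorProduct.tmul_sum, map_sum]⟩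

variable (k V) in
/-- The identification `V^{⊗2} = V ⊗ V`. -/
def tpowTwo : Tpow k V 2 ≃ₗ[k] V ⊗[k] V :=
  (tpowCons k V 1).symm ≪≫ₗ TensorProduct.congr (LinearEquiv.refl k V)
    ((tpowCons k V 0).symm ≪≫ₗ
      TensorProduct.congr (LinearEquiv.refl k V) (tpowNil k V).symm ≪≫ₗ TensorProduct.rid k V)

theorem tpowTwo_tp (v : Fin 2 → V) : tpowTwo k V (tp k v) = v 0 ⊗ₜ[k] v 1 := by
  simp [tpowTwo, tp_succ, tp_zero]

variable (k V) in
/-- The identification `V^{⊗3} = V ⊗ (V ⊗ V)`. -/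
def tpowThree : Tpow k V 3 ≃ₗ[k] V ⊗[k] (V ⊗[k] V) :=
  (tpowCons k V 2).symm ≪≫ₗ TensorProduct.congr (LinearEquiv.refl k V) (tpowTwo k V)

theorem tpowThree_tp (v : Fin 3 → V) :
    tpowThree k V (tp k v) = v 0 ⊗ₜ[k] (v 1 ⊗ₜ[k] v 2) := by
  rw [tp_succ, tpowThree]
  simp [tpowTwo_tp]

end TensorPowers

section Sweedler

variable {k : Type} [CommRing k] {H : Type} [AddCommGroup H] [Module k H] [Coalgebra k H]
  {M : Type*} [AddCommGroup M] [Module k M]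

theorem exists_sRep (n : ℕ) (h : H) : ∃ (N : ℕ) (u : Fin N → Fin (n + 1) → H), SRep k n h N u :=
  exists_eq_sum_tp _

theorem itComul_succ (n : ℕ) (h : H) :
    itComul k (n + 1) h =
      tpowCons k H (n + 1) ((itComul k n).lTensor H (Coalgebra.comul (R := k) h)) := rfl

theorem tpowTwo_itComul (h : H) : tpowTwo k H (itComul k 1 h) = Coalgebra.comul (R := k) h := by
  rw [itComul_succ]
  generalize Coalgebra.comul (R := k) h = t
  induction t with
  | zero => simp
  | add x y hx hy => simp only [map_add, hx, hy]
  | tmul x y =>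
    have hy : itComul k 0 y = tpowCons k H 0 (y ⊗ₜ[k] tpowNil k H 1) := rfl
    simp [tpowTwo, hy]

theorem tpowThree_itComul (h : H) :
    tpowThree k H (itComul k 2 h) =
      (Coalgebra.comul (R := k) (A := H)).lTensor H (Coalgebra.comul (R := k) h) := by
  rw [itComul_succ]
  generalize Coalgebra.comul (R := k) h = t
  induction t with
  | zero => simp
  | add x y hx hy => simp only [map_add, hx, hy]
  | tmul x y => simp [tpowThree, tpowTwo_itComul]

theorem SRep.sum_comul {h : H} {N : ℕ} {u : Fin N → Fin 2 → H} (hu : SRep k 1 h N u)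
    (F : H ⊗[k] H →ₗ[k] M) : ∑ i, F (u i 0 ⊗ₜ[k] u i 1) = F (Coalgebra.comul (R := k) h) := by
  rw [← tpowTwo_itComul, hu, map_sum, map_sum]
  simp only [tpowTwo_tp]

theorem SRep.sum_comul_comul {h : H} {N : ℕ} {u : Fin N → Fin 3 → H} (hu : SRep k 2 h N u)
    (F : H ⊗[k] (H ⊗[k] H) →ₗ[k] M) :
    ∑ i, F (u i 0 ⊗ₜ[k] (u i 1 ⊗ₜ[k] u i 2)) =
      F ((Coalgebra.comul (R := k) (A := H)).lTensor H (Coalgebra.comul (R := k) h)) := by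
  rw [← tpowThree_itComul, hu, map_sum, map_sum]
  simp only [tpowThree_tp]

theorem SRep.sum_counit_smul {h : H} {N : ℕ} {u : Fin N → Fin 2 → H} (hu : SRep k 1 h N u) :
    ∑ i, Coalgebra.counit (R := k) (u i 0) • u i 1 = h := by
  have hsum := hu.sum_comul
    ((TensorProduct.lid k H).toLinearMap ∘ₗ (Coalgebra.counit (R := k) (A := H)).rTensor H)
  simpa only [LinearMap.comp_apply, LinearEquiv.coe_coe, LinearMap.rTensor_tmul,
    TensorProduct.lid_tmul, Coalgebra.rTensor_counit_comul, one_smul] using hsum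

theorem SRep.sum_counit_one_smul {h : H} {N N' : ℕ} {u : Fin N → Fin 2 → H}
    {v : Fin N' → Fin 3 → H} (hu : SRep k 1 h N u) (hv : SRep k 2 h N' v)
    (F : H →ₗ[k] H →ₗ[k] M) :
    ∑ i, Coalgebra.counit (R := k) (v i 1) • F (v i 0) (v i 2) = ∑ i, F (u i 0) (u i 1) := by
  have hcontract : ((TensorProduct.lid k H).toLinearMap ∘ₗ
      (Coalgebra.counit (R := k) (A := H)).rTensor H) ∘ₗ Coalgebra.comul = LinearMap.id :=
    LinearMap.ext fun x => by
      simp only [LinearMap.comp_apply, Coalgebra.rTensor_counit_comul, LinearEquiv.coe_coe,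
        TensorProduct.lid_tmul, one_smul, LinearMap.id_apply]
  have hsum := hv.sum_comul_comul (TensorProduct.lift F ∘ₗ
    ((TensorProduct.lid k H).toLinearMap ∘ₗ
      (Coalgebra.counit (R := k) (A := H)).rTensor H).lTensor H)
  rw [LinearMap.comp_apply, ← LinearMap.lTensor_comp_apply, hcontract, LinearMap.lTensor_id,
    LinearMap.id_apply, ← hu.sum_comul] at hsum
  simpa using hsum

theorem SRep.sum_counit_zero_smul {h : H} {N N' : ℕ} {u : Fin N → Fin 2 → H}
    {v : Fin N' → Fin 3 → H} (hu : SRep k 1 h N u) (hv : SRep k 2 h N' v)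
    (F : H →ₗ[k] H →ₗ[k] M) :
    ∑ i, Coalgebra.counit (R := k) (v i 0) • F (v i 1) (v i 2) = ∑ i, F (u i 0) (u i 1) := by
  have hsum := hv.sum_comul_comul (TensorProduct.lift F ∘ₗ
    (TensorProduct.lid k (H ⊗[k] H)).toLinearMap ∘ₗ
      (Coalgebra.counit (R := k) (A := H)).rTensor (H ⊗[k] H))
  rw [LinearMap.comp_apply, LinearMap.comp_apply, ← LinearMap.comp_apply (LinearMap.rTensor _ _),
    LinearMap.rTensor_comp_lTensor, ← LinearMap.lTensor_comp_rTensor, LinearMap.comp_apply,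
    Coalgebra.rTensor_counit_comul, LinearMap.lTensor_tmul, LinearEquiv.coe_coe,
    TensorProduct.lid_tmul, one_smul, ← hu.sum_comul] at hsum
  simpa using hsum

end Sweedler

theorem SRep.one {k H : Type} [CommRing k] [Ring H] [HopfAlgebra k H] (n : ℕ) :
    SRep k n (1 : H) 1 (fun _ _ => 1) := by
  rw [SRep, Fin.sum_univ_one]
  induction n with
  | zero => rfl
  | succ n ih =>
    rw [itComul_succ, Bialgebra.comul_one, Algebra.TensorProduct.one_def, LinearMap.lTensor_tmul,
      ih]
    rfl

namespace CrossedProduct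

variable {k A H E : Type} [CommRing k] [Ring A] [Algebra k A] [Ring H] [HopfAlgebra k H]
  [Ring E] [Algebra k E] (S : CrossedProduct k A H E)

theorem aE_apply (a : A) : S.aE a = S.ι (a ⊗ₜ[k] 1) := rfl

theorem hE_apply (h : H) : S.hE h = S.ι (1 ⊗ₜ[k] h) := rfl

theorem aE_one : S.aE 1 = 1 := S.ι_one

theorem hE_one : S.hE 1 = 1 := S.ι_one

theorem aE_mul_ι (a b : A) (l : H) : S.aE a * S.ι (b ⊗ₜ[k] l) = S.ι ((a * b) ⊗ₜ[k] l) := by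
  obtain ⟨M, v, hv⟩ := exists_sRep (k := k) 1 l
  calc S.aE a * S.ι (b ⊗ₜ[k] l)
      = ∑ j, S.ι ((a * b) ⊗ₜ[k] (Coalgebra.counit (R := k) (v j 0) • v j 1)) := by
        rw [aE_apply, S.ι_mul a b 1 l 1 M (fun _ _ => 1) v (SRep.one 2) hv, Fin.sum_univ_one]
        simp only [S.one_act, (S.f_normal _).2, one_mul, mul_smul_comm, mul_one,
          TensorProduct.smul_tmul]
    _ = S.ι ((a * b) ⊗ₜ[k] l) := by rw [← map_sum, ← TensorProduct.tmul_sum, hv.sum_counit_smul]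

theorem aE_mul (a b : A) : S.aE (a * b) = S.aE a * S.aE b :=
  (S.aE_mul_ι a b 1).symm

theorem ι_eq_aE_mul_hE (a : A) (h : H) : S.ι (a ⊗ₜ[k] h) = S.aE a * S.hE h := by
  rw [hE_apply, aE_mul_ι, mul_one]

theorem ι_mul_aE (a b : A) {h : H} {N : ℕ} {u : Fin N → Fin 2 → H} (hu : SRep k 1 h N u) :
    S.ι (a ⊗ₜ[k] h) * S.aE b = ∑ i, S.ι ((a * S.act (u i 0) b) ⊗ₜ[k] u i 1) := by
  obtain ⟨N', v, hv⟩ := exists_sRep (k := k) 2 h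
  rw [aE_apply, S.ι_mul a b h 1 N' 1 v (fun _ _ => 1) hv (SRep.one 1)]
  simp only [Fin.sum_univ_one, (S.f_normal _).1, mul_one, mul_smul_comm,
    ← TensorProduct.smul_tmul', map_smul]
  exact hu.sum_counit_one_smul hv ((TensorProduct.mk k A H).compr₂ S.ι.toLinearMap ∘ₗ
    LinearMap.mulLeft k a ∘ₗ S.act.flip b)

theorem ι_mul_hE (a : A) {h l : H} {N M : ℕ} {u : Fin N → Fin 2 → H} {v : Fin M → Fin 2 → H}
    (hu : SRep k 1 h N u) (hv : SRep k 1 l M v) :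
    S.ι (a ⊗ₜ[k] h) * S.hE l =
      ∑ i, ∑ j, S.ι ((a * S.f (u i 0) (v j 0)) ⊗ₜ[k] (u i 1 * v j 1)) := by
  obtain ⟨N', w, hw⟩ := exists_sRep (k := k) 2 h
  rw [hE_apply, S.ι_mul a 1 h l N' M w v hw hv, Finset.sum_comm, Finset.sum_comm (γ := Fin N)]
  refine Finset.sum_congr rfl fun j _ => ?_
  simp only [S.act_one, mul_smul_comm, mul_one, smul_mul_assoc, ← TensorProduct.smul_tmul',
    map_smul]
  exact hu.sum_counit_zero_smul hw (((TensorProduct.mk k A H).compr₂ S.ι.toLinearMap ∘ₗ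
    LinearMap.mulLeft k a ∘ₗ S.f.flip (v j 0)).compl₂ (LinearMap.mulRight k (v j 1)))

theorem induction_on {P : E → Prop} (x : E) (zero : P 0) (add : ∀ x y, P x → P y → P (x + y))
    (ι : ∀ a h, P (S.ι (a ⊗ₜ[k] h))) : P x := by
  obtain ⟨t, rfl⟩ := S.ι.surjective x
  induction t with
  | zero => rwa [map_zero]
  | add x y hx hy => rw [map_add]; exact add _ _ hx hy
  | tmul a h => exact ι a h

theorem tensor_induction_on {M : Type*} [AddCommGroup M] [Module k M] {P : E ⊗[k] M → Prop}
    (y : E ⊗[k] M) (zero : P 0) (add : ∀ x y, P x → P y → P (x + y))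
    (ι : ∀ a h m, P (S.ι (a ⊗ₜ[k] h) ⊗ₜ[k] m)) : P y := by
  induction y with
  | zero => exact zero
  | add x y hx hy => exact add _ _ hx hy
  | tmul x m =>
    induction x using S.induction_on with
    | zero => rwa [TensorProduct.zero_tmul]
    | add x y hx hy => rw [TensorProduct.add_tmul]; exact add _ _ hx hy
    | ι a h => exact ι a h m

end CrossedProduct

section FreeModule

variable {k E M P : Type*} [CommRing k] [Ring E] [Algebra k E] [AddCommGroup M] [Module k M]
  [AddCommGroup P] [Module k P] [Module E P] [IsScalarTower k E P]

/-- The `E`-linear extension `e ⊗ m ↦ e • g m` of a `k`-linear map `g` to the free left `E`-module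
`E ⊗ M`. -/
def freeLift (g : M →ₗ[k] P) : E ⊗[k] M →ₗ[E] P :=
  TensorProduct.AlgebraTensorModule.lift (LinearMap.toSpanSingleton E (M →ₗ[k] P) g)

@[simp]
theorem freeLift_tmul (g : M →ₗ[k] P) (e : E) (m : M) : freeLift g (e ⊗ₜ[k] m) = e • g m := rfl

theorem free_hom_ext {f g : E ⊗[k] M →ₗ[E] P}
    (h : ∀ m : M, f ((1 : E) ⊗ₜ[k] m) = g ((1 : E) ⊗ₜ[k] m)) : f = g := by
  refine TensorProduct.AlgebraTensorModule.ext fun e m => ?_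
  have he : e ⊗ₜ[k] m = e • ((1 : E) ⊗ₜ[k] m) := by
    rw [TensorProduct.smul_tmul', smul_eq_mul, mul_one]
  rw [he, map_smul, map_smul, h]

end FreeModule

section BarComplex

variable {k A H E : Type} [CommRing k] [Ring A] [Algebra k A] [Ring H] [HopfAlgebra k H]
  [Ring E] [Algebra k E]

variable (k H E) in
/-- The left `E`-module `E ⊗ H^{⊗n}`.  As `E` is free over `A` on `1 # H`, it is
`E ⊗_A ⋯ ⊗_A E` with `n + 1` factors, the degree `n` part of the unnormalized bar complex
of `E` over `A`, with `e ⊗ h₁ ⊗ ⋯ ⊗ hₙ` standing for `e ⊗_A (1 # h₁) ⊗_A ⋯ ⊗_A (1 # hₙ)`. -/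
abbrev RelBar (n : ℕ) : Type := E ⊗[k] Tpow k H n

namespace RelBar

variable (S : CrossedProduct k A H E)

/-- The map `y ↦ 1 ⊗_A y`. -/
def incl (n : ℕ) : RelBar k H E n →ₗ[k] RelBar k H E (n + 1) :=
  TensorProduct.map S.aE (tpowCons k H n).toLinearMap ∘ₗ
    (TensorProduct.assoc k A H (Tpow k H n)).toLinearMap ∘ₗ
    S.ι.symm.toLinearMap.rTensor (Tpow k H n)

theorem incl_ι_tmul {n : ℕ} (a : A) (h : H) (w : Tpow k H n) :
    incl S n (S.ι (a ⊗ₜ[k] h) ⊗ₜ[k] w) = S.aE a ⊗ₜ[k] tpowCons k H n (h ⊗ₜ[k] w) := by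
  simp [incl]

theorem incl_hE_tmul {n : ℕ} (h : H) (w : Tpow k H n) :
    incl S n (S.hE h ⊗ₜ[k] w) = 1 ⊗ₜ[k] tpowCons k H n (h ⊗ₜ[k] w) := by
  rw [CrossedProduct.hE_apply, incl_ι_tmul, S.aE_one]

theorem incl_aE_smul {n : ℕ} (a : A) (y : RelBar k H E n) :
    incl S n (S.aE a • y) = S.aE a • incl S n y := by
  induction y using S.tensor_induction_on with
  | zero => simp only [smul_zero, map_zero]
  | add x y hx hy => simp only [smul_add, map_add, hx, hy]
  | ι b h w => simp only [TensorProduct.smul_tmul', smul_eq_mul, S.aE_mul_ι, incl_ι_tmul, S.aE_mul]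

section UniversalProperty

variable {P : Type*} [AddCommGroup P] [Module k P] [Module E P] [IsScalarTower k E P]

/-- The `E`-linear map `x ⊗_A y ↦ x • φ y` induced by an `A`-linear map `φ`; its definition makes
sense for `k`-linear `φ`. -/
def desc {n : ℕ} (φ : RelBar k H E n →ₗ[k] P) : RelBar k H E (n + 1) →ₗ[E] P :=
  freeLift (φ ∘ₗ S.hE.rTensor (Tpow k H n) ∘ₗ (tpowCons k H n).symm.toLinearMap)

theorem desc_tmul {n : ℕ} (φ : RelBar k H E n →ₗ[k] P) (e : E) (h : H) (w : Tpow k H n) :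
    desc S φ (e ⊗ₜ[k] tpowCons k H n (h ⊗ₜ[k] w)) = e • φ (S.hE h ⊗ₜ[k] w) := by
  simp [desc]

theorem desc_incl {n : ℕ} {φ : RelBar k H E n →ₗ[k] P}
    (hφ : ∀ a y, φ (S.aE a • y) = S.aE a • φ y) (y : RelBar k H E n) :
    desc S φ (incl S n y) = φ y := by
  induction y using S.tensor_induction_on with
  | zero => simp only [map_zero]
  | add x y hx hy => simp only [map_add, hx, hy]
  | ι b h w =>
    rw [incl_ι_tmul, desc_tmul, ← hφ, TensorProduct.smul_tmul', smul_eq_mul, S.ι_eq_aE_mul_hE]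

theorem hom_ext {n : ℕ} {f g : RelBar k H E (n + 1) →ₗ[E] P}
    (h : ∀ y, f (incl S n y) = g (incl S n y)) : f = g := by
  refine free_hom_ext fun m => ?_
  obtain ⟨t, rfl⟩ := (tpowCons k H n).surjective m
  induction t with
  | zero => simp only [map_zero, TensorProduct.tmul_zero]
  | add x y hx hy => simp only [map_add, TensorProduct.tmul_add, hx, hy]
  | tmul x w => rw [← incl_hE_tmul S, h]

end UniversalProperty

/-- The face `x₀ ⊗_A ⋯ ⊗_A x_{n+1} ↦ x₀ ⊗_A ⋯ ⊗_A xᵢ xᵢ₊₁ ⊗_A ⋯ ⊗_A x_{n+1}`. -/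
def face : ∀ n, Fin (n + 1) → (RelBar k H E (n + 1) →ₗ[E] RelBar k H E n)
  | 0, _ => desc S LinearMap.id
  | n + 1, i =>
    Fin.cases (desc S LinearMap.id)
      (fun i => desc S (incl S n ∘ₗ (face n i).restrictScalars k)) i

theorem face_zero (n : ℕ) : face S n 0 = desc S LinearMap.id := by
  cases n <;> rfl

theorem face_zero_incl {n : ℕ} (y : RelBar k H E n) : face S n 0 (incl S n y) = y := by
  rw [face_zero, desc_incl S fun _ _ => rfl, LinearMap.id_apply]

theorem face_succ_incl {n : ℕ} (i : Fin (n + 1)) (y : RelBar k H E (n + 1)) :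
    face S (n + 1) i.succ (incl S (n + 1) y) = incl S n (face S n i y) :=
  desc_incl S (fun a y => by
    simp only [LinearMap.comp_apply, LinearMap.restrictScalars_apply, map_smul, incl_aE_smul]) y

/-- The bar differential, with the signs `-1, 1, -1, …` of `∂`. -/
def d (n : ℕ) : RelBar k H E (n + 1) →ₗ[E] RelBar k H E n :=
  ∑ i : Fin (n + 1), (-1 : ℤ) ^ ((i : ℕ) + 1) • face S n i

theorem d_zero_incl (y : RelBar k H E 0) : d S 0 (incl S 0 y) = -y := by
  simp [d, face_zero_incl]

theorem d_succ_incl {n : ℕ} (y : RelBar k H E (n + 1)) :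
    d S (n + 1) (incl S (n + 1) y) = -y - incl S n (d S n y) := by
  simp only [d, Fin.sum_univ_succ (n := n + 1), LinearMap.add_apply, LinearMap.sum_apply,
    LinearMap.smul_apply, face_zero_incl, face_succ_incl, map_sum, map_zsmul]
  simp [pow_succ', sub_eq_add_neg]

theorem d_comp_d (n : ℕ) : d S n ∘ₗ d S (n + 1) = 0 := by
  refine hom_ext S fun y => ?_
  cases n with
  | zero => simp [d_succ_incl, d_zero_incl]
  | succ n =>
    have hdd : d S n (d S (n + 1) y) = 0 := LinearMap.congr_fun (d_comp_d n) y
    simp [d_succ_incl, hdd]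

/-- Right multiplication of the last factor by `x`. -/
def right (x : E) : ∀ n, RelBar k H E n →ₗ[E] RelBar k H E n
  | 0 => TensorProduct.AlgebraTensorModule.map (LinearMap.toSpanSingleton E E x) LinearMap.id
  | n + 1 => desc S (incl S n ∘ₗ (right x n).restrictScalars k)

theorem right_zero_tmul (x e : E) (c : Tpow k H 0) :
    right S x 0 (e ⊗ₜ[k] c) = (e * x) ⊗ₜ[k] c := rfl

theorem right_incl (x : E) {n : ℕ} (y : RelBar k H E n) :
    right S x (n + 1) (incl S n y) = incl S n (right S x n y) :=
  desc_incl S (fun a y => by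
    simp only [LinearMap.comp_apply, LinearMap.restrictScalars_apply, map_smul, incl_aE_smul]) y

theorem right_add (x x' : E) (n : ℕ) : right S (x + x') n = right S x n + right S x' n := by
  induction n with
  | zero =>
    refine free_hom_ext fun c => ?_
    simp only [LinearMap.add_apply, right_zero_tmul, mul_add, TensorProduct.add_tmul]
  | succ n ih =>
    refine hom_ext S fun y => ?_
    simp only [right_incl, ih, LinearMap.add_apply, map_add]

theorem right_mul (x x' : E) (n : ℕ) : right S (x * x') n = right S x' n ∘ₗ right S x n := by
  induction n with
  | zero =>
    refine free_hom_ext fun c => ?_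
    simp only [LinearMap.comp_apply, right_zero_tmul, mul_assoc]
  | succ n ih =>
    refine hom_ext S fun y => ?_
    simp only [right_incl, ih, LinearMap.comp_apply]

theorem right_zero (n : ℕ) : right S 0 n = 0 := by
  simpa using right_add S 0 0 n

theorem d_right (x : E) {n : ℕ} (y : RelBar k H E (n + 1)) :
    d S n (right S x (n + 1) y) = right S x n (d S n y) := by
  suffices h : d S n ∘ₗ right S x (n + 1) = right S x n ∘ₗ d S n from LinearMap.congr_fun h y
  clear y
  induction n with
  | zero =>
    refine hom_ext S fun y => ?_
    simp only [LinearMap.comp_apply, right_incl, d_zero_incl, map_neg]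
  | succ n ih =>
    refine hom_ext S fun y => ?_
    have hy : d S n (right S x (n + 1) y) = right S x n (d S n y) := LinearMap.congr_fun ih y
    simp only [LinearMap.comp_apply, right_incl, d_succ_incl, map_sub, map_neg, hy]

/-- The map `x₀ ⊗_A ⋯ ⊗_A xₙ ↦ x₀ ⊗_A ⋯ ⊗_A xₙ ⊗_A (1 # h)`. -/
def append (h : H) : ∀ n, RelBar k H E n →ₗ[E] RelBar k H E (n + 1)
  | 0 => TensorProduct.AlgebraTensorModule.lTensor E E
      ((tpowCons k H 0).toLinearMap ∘ₗ TensorProduct.mk k H (Tpow k H 0) h)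
  | n + 1 => desc S (incl S (n + 1) ∘ₗ (append h n).restrictScalars k)

theorem append_zero_tmul (h : H) (e : E) (c : Tpow k H 0) :
    append S h 0 (e ⊗ₜ[k] c) = e ⊗ₜ[k] tpowCons k H 0 (h ⊗ₜ[k] c) := rfl

theorem append_incl (h : H) {n : ℕ} (y : RelBar k H E n) :
    append S h (n + 1) (incl S n y) = incl S (n + 1) (append S h n y) :=
  desc_incl S (fun a y => by
    simp only [LinearMap.comp_apply, LinearMap.restrictScalars_apply, map_smul, incl_aE_smul]) y

theorem append_tmul_tp (h : H) {n : ℕ} (e : E) (hs : Fin n → H) :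
    append S h n (e ⊗ₜ[k] tp k hs) = e ⊗ₜ[k] tp k (Fin.snoc hs h : Fin (n + 1) → H) := by
  induction n generalizing e with
  | zero => rfl
  | succ n ih =>
    have he : e ⊗ₜ[k] tp k hs = e • incl S n (S.hE (hs 0) ⊗ₜ[k] tp k (fun i => hs i.succ)) := by
      rw [incl_hE_tmul, TensorProduct.smul_tmul', smul_eq_mul, mul_one, tp_succ]
    rw [he, map_smul, append_incl, ih, incl_hE_tmul, TensorProduct.smul_tmul', smul_eq_mul,
      mul_one, ← tp_cons, Fin.cons_snoc_eq_snoc_cons, ← Fin.cons_self_tail hs]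
    rfl

theorem right_hE_append_one (h : H) (n : ℕ) :
    right S (S.hE h) (n + 1) ∘ₗ append S 1 n = append S h n := by
  induction n with
  | zero =>
    refine free_hom_ext fun c => ?_
    rw [LinearMap.comp_apply, append_zero_tmul, append_zero_tmul, ← incl_hE_tmul S, S.hE_one,
      right_incl, right_zero_tmul, one_mul, incl_hE_tmul]
  | succ n ih =>
    refine hom_ext S fun y => ?_
    rw [LinearMap.comp_apply, append_incl, append_incl, right_incl, ← ih, LinearMap.comp_apply]

theorem right_aE_append_one (a : A) (n : ℕ) :
    right S (S.aE a) (n + 1) ∘ₗ append S 1 n = append S 1 n ∘ₗ right S (S.aE a) n := by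
  induction n with
  | zero =>
    refine free_hom_ext fun c => ?_
    rw [LinearMap.comp_apply, LinearMap.comp_apply, append_zero_tmul, right_zero_tmul,
      append_zero_tmul, one_mul, ← incl_hE_tmul S, S.hE_one, right_incl, right_zero_tmul, one_mul,
      S.aE_apply, incl_ι_tmul, S.aE_apply]
  | succ n ih =>
    refine hom_ext S fun y => ?_
    have hy := LinearMap.congr_fun ih y
    simp only [LinearMap.comp_apply] at hy
    simp only [LinearMap.comp_apply, append_incl, right_incl, hy]

theorem right_ι_append_one (a : A) (h : H) {n : ℕ} (y : RelBar k H E n) :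
    right S (S.ι (a ⊗ₜ[k] h)) (n + 1) (append S 1 n y) = append S h n (right S (S.aE a) n y) := by
  have ha := LinearMap.congr_fun (right_aE_append_one S a n) y
  rw [LinearMap.comp_apply, LinearMap.comp_apply] at ha
  rw [S.ι_eq_aE_mul_hE, right_mul, LinearMap.comp_apply, ha]
  exact LinearMap.congr_fun (right_hE_append_one S h n) (right S (S.aE a) n y)

theorem d_zero_append_one (y : RelBar k H E 0) : d S 0 (append S 1 0 y) = -y := by
  suffices h : d S 0 ∘ₗ append S 1 0 = -LinearMap.id from LinearMap.congr_fun h y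
  refine free_hom_ext fun c => ?_
  rw [LinearMap.comp_apply, append_zero_tmul, ← incl_hE_tmul S, d_zero_incl, S.hE_one]
  rfl

theorem d_append_one {n : ℕ} (y : RelBar k H E (n + 1)) :
    d S (n + 1) (append S 1 (n + 1) y) = append S 1 n (d S n y) + (-1 : ℤ) ^ n • y := by
  suffices h : d S (n + 1) ∘ₗ append S 1 (n + 1) =
      append S 1 n ∘ₗ d S n + (-1 : ℤ) ^ n • LinearMap.id from LinearMap.congr_fun h y
  clear y
  induction n with
  | zero =>
    refine hom_ext S fun y => ?_
    simp [append_incl, d_succ_incl, d_zero_incl, d_zero_append_one]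
  | succ n ih =>
    refine hom_ext S fun y => ?_
    have hy : d S (n + 1) (append S 1 (n + 1) y) = append S 1 n (d S n y) + (-1 : ℤ) ^ n • y :=
      LinearMap.congr_fun ih y
    simp only [LinearMap.comp_apply, LinearMap.add_apply, LinearMap.smul_apply,
      LinearMap.id_apply, append_incl, d_succ_incl, hy, map_sub, map_neg, map_add, map_zsmul]
    rw [pow_succ, mul_neg_one, neg_smul]
    abel

end RelBar

end BarComplex

section NormalizedQuotients

variable {k : Type} [CommRing k]

/-- The map `V^{⊗n} → W^{⊗n}` induced by `q : V → W`. -/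
def tpowMap {V W : Type} [AddCommGroup V] [Module k V] [AddCommGroup W] [Module k W]
    (q : V →ₗ[k] W) : ∀ n : ℕ, Tpow k V n →ₗ[k] Tpow k W n
  | 0 => (tpowNil k W).toLinearMap ∘ₗ (tpowNil k V).symm.toLinearMap
  | n + 1 => (tpowCons k W n).toLinearMap ∘ₗ TensorProduct.map q (tpowMap q n) ∘ₗ
      (tpowCons k V n).symm.toLinearMap

/-- The map `V^{⊗(n+1)} → W^{⊗n} ⊗ V` induced by `q : V → W` on the first `n` factors. -/
def tpowMapInit {V W : Type} [AddCommGroup V] [Module k V] [AddCommGroup W] [Module k W]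
    (q : V →ₗ[k] W) : ∀ n : ℕ, Tpow k V (n + 1) →ₗ[k] Tpow k W n ⊗[k] V
  | 0 => (tpowMap q 0).rTensor V ∘ₗ (TensorProduct.comm k V (Tpow k V 0)).toLinearMap ∘ₗ
      (tpowCons k V 0).symm.toLinearMap
  | n + 1 => (tpowCons k W n).toLinearMap.rTensor V ∘ₗ
      (TensorProduct.assoc k W (Tpow k W n) V).symm.toLinearMap ∘ₗ
      TensorProduct.map q (tpowMapInit q n) ∘ₗ (tpowCons k V (n + 1)).symm.toLinearMap

variable {V W : Type} [AddCommGroup V] [Module k V] [AddCommGroup W] [Module k W] (q : V →ₗ[k] W)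

theorem tpowMap_tp {n : ℕ} (v : Fin n → V) : tpowMap q n (tp k v) = tp k (fun i => q (v i)) := by
  induction n with
  | zero => simp [tpowMap, tp_zero]
  | succ n ih => rw [tp_succ, tp_succ, ← ih]; simp [tpowMap]

theorem tpowMap_surjective (hq : Function.Surjective q) (n : ℕ) :
    Function.Surjective (tpowMap q n) := by
  induction n with
  | zero => exact (tpowNil k W).surjective.comp (tpowNil k V).symm.surjective
  | succ n ih =>
    exact (tpowCons k W n).surjective.comp
      ((TensorProduct.map_surjective hq ih).comp (tpowCons k V n).symm.surjective)

theorem tpowMapInit_tp {n : ℕ} (v : Fin (n + 1) → V) :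
    tpowMapInit q n (tp k v) = tp k (fun i => q (v i.castSucc)) ⊗ₜ[k] v (Fin.last n) := by
  induction n with
  | zero =>
    rw [tp_succ]
    simp only [tpowMapInit, LinearMap.comp_apply, LinearEquiv.coe_coe,
      LinearEquiv.symm_apply_apply, TensorProduct.comm_tmul, LinearMap.rTensor_tmul, tpowMap_tp]
    rfl
  | succ n ih =>
    rw [tp_succ]
    simp only [tpowMapInit, LinearMap.comp_apply, LinearEquiv.coe_coe,
      LinearEquiv.symm_apply_apply, TensorProduct.map_tmul, ih, TensorProduct.assoc_symm_tmul]
    rfl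

theorem tpowMapInit_surjective (hq : Function.Surjective q) (n : ℕ) :
    Function.Surjective (tpowMapInit q n) := by
  induction n with
  | zero =>
    exact (LinearMap.rTensor_surjective V (tpowMap_surjective q hq 0)).comp
      ((TensorProduct.comm k V (Tpow k V 0)).surjective.comp (tpowCons k V 0).symm.surjective)
  | succ n ih =>
    exact (LinearMap.rTensor_surjective V (tpowCons k W n).surjective).comp
      ((TensorProduct.assoc k W (Tpow k W n) V).symm.surjective.comp
        ((TensorProduct.map_surjective hq ih).comp (tpowCons k V (n + 1)).symm.surjective))

end NormalizedQuotients

theorem xgen_hom_ext {k A H E : Type} {P : Type*} [CommRing k] [Ring A] [Algebra k A] [Ring H]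
    [HopfAlgebra k H] [Ring E] [Algebra k E] [AddCommGroup P] [Module k P] {r s : ℕ}
    {f g : Xc k A H E r s →ₗ[k] P}
    (h : ∀ e (hs : Fin s → H) (as : Fin r → A) x, f (xgen e hs as x) = g (xgen e hs as x)) :
    f = g := by
  refine TensorProduct.ext (LinearMap.ext fun e => TensorProduct.ext (tpow_hom_ext fun hs =>
    TensorProduct.ext (tpow_hom_ext fun as => LinearMap.ext fun x => ?_)))
  obtain ⟨hs, rfl⟩ := (Submodule.mkQ_surjective (unitSub k H)).comp_left hs
  obtain ⟨as, rfl⟩ := (Submodule.mkQ_surjective (unitSub k A)).comp_left as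
  exact h e hs as x

namespace RelBar

variable {k A H E : Type} [CommRing k] [Ring A] [Algebra k A] [Ring H] [HopfAlgebra k H]
  [Ring E] [Algebra k E] {P : Type*} [AddCommGroup P] [Module k P]

theorem hom_ext_ι (S : CrossedProduct k A H E) {n : ℕ} {f g : RelBar k H E n →ₗ[k] P}
    (h : ∀ a h₀ (hs : Fin n → H),
      f (S.ι (a ⊗ₜ[k] h₀) ⊗ₜ[k] tp k hs) = g (S.ι (a ⊗ₜ[k] h₀) ⊗ₜ[k] tp k hs)) : f = g := by
  refine LinearMap.ext fun y => ?_
  induction y using S.tensor_induction_on with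
  | zero => simp only [map_zero]
  | add x y hx hy => simp only [map_add, hx, hy]
  | ι a h₀ w =>
    exact LinearMap.congr_fun (tpow_hom_ext (f := f ∘ₗ TensorProduct.mk k E _ _)
      (g := g ∘ₗ TensorProduct.mk k E _ _) fun v => h a h₀ v) w

variable (k H E) in
/-- The projection of the bar complex onto the column `Y`:
`e ⊗ h₁ ⊗ ⋯ ⊗ hₛ₊₁ ↦ e ⊗ h̄₁ ⊗ ⋯ ⊗ h̄ₛ ⊗ hₛ₊₁`. -/
def toY (s : ℕ) : RelBar k H E (s + 1) →ₗ[E] Yc k H E s :=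
  TensorProduct.AlgebraTensorModule.lTensor E E (tpowMapInit (qbar k H) s)

theorem toY_tmul_tp {s : ℕ} (e : E) (hs : Fin (s + 1) → H) :
    toY k H E s (e ⊗ₜ[k] tp k hs) = ygen e (fun i => hs i.castSucc) (hs (Fin.last s)) := by
  rw [toY, TensorProduct.AlgebraTensorModule.lTensor_tmul, tpowMapInit_tp]
  rfl

theorem toY_tmul_tp_snoc {s : ℕ} (e : E) (hs : Fin s → H) (h : H) :
    toY k H E s (e ⊗ₜ[k] tp k (Fin.snoc hs h : Fin (s + 1) → H)) = ygen e hs h := by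
  simp only [toY_tmul_tp, Fin.snoc_castSucc, Fin.snoc_last]

theorem toY_surjective (s : ℕ) : Function.Surjective (toY k H E s) :=
  LinearMap.lTensor_surjective E (tpowMapInit_surjective _ (Submodule.mkQ_surjective _) s)

/-- The map `e ⊗ h₁ ⊗ ⋯ ⊗ hₛ ↦ e ⊗ h̄₁ ⊗ ⋯ ⊗ h̄ₛ ⊗ ā₁ ⊗ ⋯ ⊗ āᵣ ⊗ x` from the bar complex to
`X_{rs}`. -/
def toX {r s : ℕ} (as : Fin r → A) (x : E) : RelBar k H E s →ₗ[E] Xc k A H E r s :=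
  TensorProduct.AlgebraTensorModule.lTensor E E
    ((TensorProduct.mk k _ _).flip (tp k (fun i => qbar k A (as i)) ⊗ₜ[k] x) ∘ₗ
      tpowMap (qbar k H) s)

theorem toX_tmul_tp {r s : ℕ} (as : Fin r → A) (x e : E) (hs : Fin s → H) :
    toX as x (e ⊗ₜ[k] tp k hs) = (xgen e hs as x : Xc k A H E r s) := by
  rw [toX, TensorProduct.AlgebraTensorModule.lTensor_tmul, LinearMap.comp_apply, tpowMap_tp]
  rfl

theorem toX_add {r s : ℕ} (as : Fin r → A) (x x' : E) (y : RelBar k H E s) :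
    toX as (x + x') y = toX as x y + toX as x' y := by
  suffices h : toX as (x + x') = toX as x + toX as x' (s := s) (k := k) (H := H) from
    LinearMap.congr_fun h y
  refine free_hom_ext fun w => ?_
  simp [toX, TensorProduct.tmul_add]

theorem toX_zero {r s : ℕ} (as : Fin r → A) (y : RelBar k H E s) : toX as 0 y = 0 := by
  simpa using toX_add as 0 0 y

theorem rX_toX {r s : ℕ} (as : Fin r → A) (x x' : E) (y : RelBar k H E s) :
    rX x' (toX as x y) = toX as (x * x') y := by
  induction y using TensorProduct.induction_on with
  | zero => simp only [map_zero]
  | add y z hy hz => simp only [map_add, hy, hz]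
  | tmul e w => rfl

theorem toX_hom_ext {r s : ℕ} {f g : Xc k A H E r s →ₗ[k] P}
    (h : ∀ as x y, f (toX as x y) = g (toX as x y)) : f = g :=
  xgen_hom_ext fun e hs as x => by simpa only [toX_tmul_tp] using h as x (e ⊗ₜ[k] tp k hs)

end RelBar

section SweedlerExpansions

variable {k A H E : Type} [CommRing k] [Ring A] [Algebra k A] [Ring H] [HopfAlgebra k H]
  [Ring E] [Algebra k E] (S : CrossedProduct k A H E)

theorem sum_pi_succ {P : Type*} [AddCommMonoid P] {n : ℕ} {N : Fin (n + 1) → ℕ}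
    (F : (∀ i, Fin (N i)) → P) :
    ∑ c, F c = ∑ x : Fin (N 0), ∑ c' : (∀ i : Fin n, Fin (N i.succ)), F (Fin.cons x c') := by
  rw [← (Fin.consEquiv (fun i => Fin (N i))).sum_comp, Fintype.sum_prod_type]
  rfl

namespace RelBar

theorem right_aE_ι_tmul {s : ℕ} (a : A) (h : Fin (s + 1) → H) (b : A) {N : Fin (s + 1) → ℕ}
    {v : ∀ i, Fin (N i) → Fin 2 → H} (hv : ∀ i, SRep k 1 (h i) (N i) (v i)) :
    right S (S.aE b) s (S.ι (a ⊗ₜ[k] h 0) ⊗ₜ[k] tp k (fun i => h i.succ)) =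
      ∑ c : (∀ i, Fin (N i)),
        S.ι ((a * iterAct k S.act (fun i => v i (c i) 0) b) ⊗ₜ[k] (v 0 (c 0) 1)) ⊗ₜ[k]
          tp k (fun i : Fin s => v i.succ (c i.succ) 1) := by
  induction s generalizing a with
  | zero =>
    rw [right_zero_tmul, S.ι_mul_aE a b (hv 0), TensorProduct.sum_tmul, sum_pi_succ]
    refine Finset.sum_congr rfl fun x _ => ?_
    rw [Fintype.sum_unique]
    rfl
  | succ s ih =>
    rw [tp_succ, right, desc_tmul, LinearMap.comp_apply, LinearMap.restrictScalars_apply,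
      CrossedProduct.hE_apply, ih 1 (fun i => h i.succ) (fun i => hv i.succ), map_sum,
      Finset.smul_sum]
    conv_rhs => rw [sum_pi_succ, Finset.sum_comm]
    refine Finset.sum_congr rfl fun c _ => ?_
    rw [one_mul, incl_ι_tmul, TensorProduct.smul_tmul', smul_eq_mul, S.ι_mul_aE a _ (hv 0),
      TensorProduct.sum_tmul]
    rfl

theorem face_ι_tmul {n : ℕ} (i : Fin (n + 1)) (a : A) (h : Fin (n + 2) → H)
    {N : Fin (n + 2) → ℕ} {v : ∀ i, Fin (N i) → Fin 2 → H}
    (hv : ∀ i, SRep k 1 (h i) (N i) (v i)) :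
    face S n i (S.ι (a ⊗ₜ[k] h 0) ⊗ₜ[k] tp k (fun i => h i.succ)) =
      ∑ c : (∀ j : Fin ((i : ℕ) + 2), Fin (N ⟨(j : ℕ), by omega⟩)),
        S.ι ((a * iterAct k S.act
                (fun j : Fin (i : ℕ) => v ⟨(j : ℕ), by omega⟩ (c ⟨(j : ℕ), by omega⟩) 0)
                (S.f (v ⟨(i : ℕ), by omega⟩ (c ⟨(i : ℕ), by omega⟩) 0)
                  (v ⟨(i : ℕ) + 1, by omega⟩ (c ⟨(i : ℕ) + 1, by omega⟩) 0))) ⊗ₜ[k]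
              (if (i : ℕ) = 0 then
                (v ⟨0, by omega⟩ (c ⟨0, by omega⟩) 1) * (v ⟨1, by omega⟩ (c ⟨1, by omega⟩) 1)
              else v ⟨0, by omega⟩ (c ⟨0, by omega⟩) 1)) ⊗ₜ[k]
          tp k (fun p : Fin n =>
              if hp : (p : ℕ) + 1 < (i : ℕ) then
                v ⟨(p : ℕ) + 1, by omega⟩ (c ⟨(p : ℕ) + 1, by omega⟩) 1
              else if hp' : (p : ℕ) + 1 = (i : ℕ) then
                (v ⟨(p : ℕ) + 1, by omega⟩ (c ⟨(p : ℕ) + 1, by omega⟩) 1) *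
                  (v ⟨(p : ℕ) + 2, by omega⟩ (c ⟨(p : ℕ) + 2, by omega⟩) 1)
              else h ⟨(p : ℕ) + 2, by omega⟩) := by
  cases i using Fin.cases with
  | zero =>
    rw [face_zero, tp_succ, desc_tmul, LinearMap.id_apply, TensorProduct.smul_tmul', smul_eq_mul,
      S.ι_mul_hE a (hv 0) (hv (Fin.succ 0)), TensorProduct.sum_tmul, sum_pi_succ]
    refine Finset.sum_congr rfl fun x _ => ?_
    rw [TensorProduct.sum_tmul, sum_pi_succ]
    refine Finset.sum_congr rfl fun y _ => ?_
    have : IsEmpty (Fin ((0 : Fin (n + 1)) : ℕ)) := Fin.isEmpty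
    rw [Fintype.sum_unique]
    rfl
  | succ i =>
    cases n with
    | zero => exact i.elim0
    | succ n =>
      have hface : ∀ y, face S (n + 1) i.succ y =
        desc S (incl S n ∘ₗ (face S n i).restrictScalars k) y := fun _ => rfl
      rw [hface, tp_succ, desc_tmul, LinearMap.comp_apply, LinearMap.restrictScalars_apply,
        CrossedProduct.hE_apply, face_ι_tmul i 1 (fun i => h i.succ) (fun i => hv i.succ),
        map_sum, Finset.smul_sum]
      conv_rhs => rw [sum_pi_succ, Finset.sum_comm]
      refine Finset.sum_congr rfl fun c _ => ?_
      rw [one_mul, incl_ι_tmul, TensorProduct.smul_tmul', smul_eq_mul, S.ι_mul_aE a _ (hv 0),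
        TensorProduct.sum_tmul]
      refine Finset.sum_congr rfl fun x _ => ?_
      rw [if_neg (show ((i.succ : Fin (n + 2)) : ℕ) ≠ 0 by simp), ← tp_cons]
      congr 2
      funext p
      cases p using Fin.cases with
      | zero =>
        by_cases hi : (i : ℕ) = 0
        · obtain rfl : i = 0 := Fin.ext hi
          rfl
        · rw [Fin.cons_zero, if_neg hi, dif_pos (by simp only [Fin.val_zero, Fin.val_succ]; omega)]
          rfl
      | succ q =>
        simp only [Fin.cons_succ, Fin.val_succ, Nat.add_lt_add_iff_right, Nat.add_right_cancel_iff]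
        rfl

end RelBar

end SweedlerExpansions

section Structure

variable {k A H E : Type} [CommRing k] [Ring A] [Algebra k A] [Ring H] [HopfAlgebra k H]
  [Ring E] [Algebra k E] {S : CrossedProduct k A H E} (R : ResData k A H E S)

open RelBar

theorem del_toY {s : ℕ} (y : RelBar k H E (s + 2)) :
    R.del s (toY k H E (s + 1) y) = toY k H E s (d S (s + 1) y) := by
  suffices h : R.del s ∘ₗ (toY k H E (s + 1)).restrictScalars k =
      (toY k H E s ∘ₗ d S (s + 1)).restrictScalars k from LinearMap.congr_fun h y
  refine hom_ext_ι S fun a h₀ hs' => ?_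
  obtain ⟨hs, h', rfl⟩ : ∃ (hs : Fin (s + 1) → H) (h' : H), hs' = Fin.snoc hs h' :=
    ⟨Fin.init hs', hs' (Fin.last _), (Fin.snoc_init_self hs').symm⟩
  choose N v hv using fun i => exists_sRep (k := k) 1
    ((Fin.cons h₀ (Fin.snoc hs h') : Fin (s + 3) → H) i)
  simp only [LinearMap.comp_apply, LinearMap.restrictScalars_apply, toY_tmul_tp_snoc, d,
    R.del_eq s a h₀ hs h' N v hv, LinearMap.sum_apply, LinearMap.smul_apply, map_sum, map_zsmul]
  refine Finset.sum_congr rfl fun i _ => ?_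
  have hface := face_ι_tmul S i a (Fin.cons h₀ (Fin.snoc hs h')) hv
  simp only [Fin.cons_zero, Fin.cons_succ] at hface
  rw [hface, map_sum]
  congr 1
  refine Finset.sum_congr rfl fun c _ => ?_
  rw [toY_tmul_tp]
  congr 1
  simp only [Fin.val_last]
  by_cases hi : (i : ℕ) = s + 1
  · rw [dif_pos hi, dif_neg (by omega), dif_pos hi.symm]
  · rw [dif_neg hi, dif_neg (by omega), dif_neg (Ne.symm hi)]

theorem mu_toX {s : ℕ} (as : Fin 0 → A) (x : E) (y : RelBar k H E s) :
    R.mu s (toX as x y) = toY k H E s (right S x (s + 1) (append S 1 s y)) := by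
  obtain rfl : as = fun i => i.elim0 := Subsingleton.elim _ _
  induction x using S.induction_on with
  | zero => simp only [toX_zero, right_zero, LinearMap.zero_apply, map_zero]
  | add x x' hx hx' => simp only [toX_add, right_add, LinearMap.add_apply, map_add, hx, hx']
  | ι b h' =>
    suffices h : R.mu s ∘ₗ (toX (fun i => i.elim0) (S.ι (b ⊗ₜ[k] h'))).restrictScalars k =
        (toY k H E s ∘ₗ right S (S.ι (b ⊗ₜ[k] h')) (s + 1) ∘ₗ append S 1 s).restrictScalars k from
      LinearMap.congr_fun h y
    refine hom_ext_ι S fun a h₀ hs => ?_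
    choose N v hv using fun i => exists_sRep (k := k) 1 ((Fin.cons h₀ hs : Fin (s + 1) → H) i)
    have hright := right_aE_ι_tmul S a (Fin.cons h₀ hs) b hv
    simp only [Fin.cons_zero, Fin.cons_succ] at hright
    simp only [LinearMap.comp_apply, LinearMap.restrictScalars_apply]
    rw [right_ι_append_one, hright, toX_tmul_tp, R.mu_eq s a h₀ hs b h' N v hv]
    simp only [map_sum, append_tmul_tp, toY_tmul_tp_snoc]

end Structure

theorem snoc_comp_succ {r : ℕ} {T : Type*} (as : Fin (r + 1) → T) (b : T) :
    (fun i : Fin (r + 1) => (Fin.snoc as b : Fin (r + 2) → T) i.succ) =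
      Fin.snoc (fun i : Fin r => as i.succ) b := by
  funext j
  refine Fin.lastCases ?_ (fun j => ?_) j
  · rw [Fin.snoc_last, Fin.succ_last, Fin.snoc_last]
  · rw [Fin.snoc_castSucc, Fin.succ_castSucc, Fin.snoc_castSucc]

section LeftAction

variable {k A H E : Type} [CommRing k] [Ring A] [Algebra k A] [Ring H] [HopfAlgebra k H]
  [Ring E] [Algebra k E]

theorem lX_apply (e : E) {r s : ℕ} (x : Xc k A H E r s) : lX e x = e • x := by
  induction x using TensorProduct.induction_on with
  | zero => simp only [map_zero, smul_zero]
  | add x y hx hy => simp only [map_add, smul_add, hx, hy]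
  | tmul e' w => rfl

theorem lY_apply (e : E) {s : ℕ} (y : Yc k H E s) : lY e y = e • y := by
  induction y using TensorProduct.induction_on with
  | zero => simp only [map_zero, smul_zero]
  | add x y hx hy => simp only [map_add, smul_add, hx, hy]
  | tmul e' w => rfl

end LeftAction

namespace RelBar

variable {k A H E : Type} [CommRing k] [Ring A] [Algebra k A] [Ring H] [HopfAlgebra k H]
  [Ring E] [Algebra k E] {P : Type*} [AddCommGroup P] [Module k P] (S : CrossedProduct k A H E)

theorem toX_hom_ext_ι {r s : ℕ} {f g : Xc k A H E r s →ₗ[k] P}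
    (h : ∀ as a h' y, f (toX as (S.ι (a ⊗ₜ[k] h')) y) = g (toX as (S.ι (a ⊗ₜ[k] h')) y)) :
    f = g := by
  refine toX_hom_ext fun as x y => ?_
  induction x using S.induction_on with
  | zero => simp only [toX_zero, map_zero]
  | add x x' hx hx' => simp only [toX_add, map_add, hx, hx']
  | ι a h' => exact h as a h' y

theorem append_hom_ext {n : ℕ} {f g : RelBar k H E (n + 1) →ₗ[k] P}
    (h : ∀ h' y, f (append S h' n y) = g (append S h' n y)) : f = g := by
  refine hom_ext_ι S fun a h₀ hs => ?_
  have hhs := append_tmul_tp S (hs (Fin.last n)) (S.ι (a ⊗ₜ[k] h₀)) (Fin.init hs)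
  rw [Fin.snoc_init_self] at hhs
  rw [← hhs]
  exact h (hs (Fin.last n)) _

theorem toY_append_hom_ext {s : ℕ} {f g : Yc k H E s →ₗ[k] P}
    (h : ∀ h' y, f (toY k H E s (append S h' s y)) = g (toY k H E s (append S h' s y))) :
    f = g := by
  refine LinearMap.ext fun y => ?_
  obtain ⟨y, rfl⟩ := toY_surjective s y
  exact LinearMap.congr_fun (append_hom_ext S (f := f ∘ₗ (toY k H E s).restrictScalars k)
    (g := g ∘ₗ (toY k H E s).restrictScalars k) h) y

end RelBar

section Rows

variable {k A H E : Type} [CommRing k] [Ring A] [Algebra k A] [Ring H] [HopfAlgebra k H]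
  [Ring E] [Algebra k E] {S : CrossedProduct k A H E} (R : ResData k A H E S)

open RelBar

theorem mulAt_snoc_castSucc {r : ℕ} (as : Fin (r + 1) → A) (b : A) (i : Fin r) :
    mulAt (Fin.snoc as b : Fin (r + 2) → A) i.castSucc = Fin.snoc (mulAt as i) b := by
  funext j
  refine Fin.lastCases ?_ (fun j => ?_) j
  · rw [Fin.snoc_last, mulAt, if_neg (by simp), if_neg (by simp; omega), Fin.succ_last,
      Fin.snoc_last]
  · simp only [Fin.snoc_castSucc, mulAt, Fin.succ_castSucc, Fin.val_castSucc]

theorem mulAt_snoc_last {r : ℕ} (as : Fin (r + 1) → A) (b : A) :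
    mulAt (Fin.snoc as b : Fin (r + 2) → A) (Fin.last r) =
      Fin.snoc (fun i : Fin r => as i.castSucc) (as (Fin.last r) * b) := by
  funext j
  refine Fin.lastCases ?_ (fun j => ?_) j
  · rw [Fin.snoc_last, mulAt, if_neg (by simp), if_pos (by simp), Fin.succ_last, Fin.snoc_last,
      Fin.snoc_castSucc]
  · rw [Fin.snoc_castSucc, mulAt, if_pos (by simp), Fin.snoc_castSucc]

/-- The horizontal differential `d⁰_{r+1,s}`, with its target written as `X_{rs}`. -/
def ResData.d0 (r s : ℕ) : Xc k A H E (r + 1) s →ₗ[k] Xc k A H E r s := R.dl 0 (r + 1) s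

theorem d0_rX {r s : ℕ} (e : E) (x : Xc k A H E (r + 1) s) :
    R.d0 r s (rX e x) = rX e (R.d0 r s x) := LinearMap.congr_fun (R.dl_rmul 0 (r + 1) s e) x

theorem d0_toX {r s : ℕ} (as : Fin (r + 1) → A) (x : E) (y : RelBar k H E s) :
    R.d0 r s (toX as x y) =
      toX (fun i => as i.succ) x (right S (S.aE (as 0)) s y) +
        (∑ i : Fin r, (-1 : ℤ) ^ ((i : ℕ) + 1) • toX (mulAt as i) x y) +
        (-1 : ℤ) ^ (r + 1) • toX (fun i => as i.castSucc) (S.aE (as (Fin.last r)) * x) y := by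
  induction x using S.induction_on with
  | zero => simp only [toX_zero, mul_zero, map_zero, smul_zero, Finset.sum_const_zero, add_zero]
  | add x x' hx hx' =>
    simp only [toX_add, mul_add, map_add, smul_add, Finset.sum_add_distrib, hx, hx']
    abel
  | ι b h' =>
    suffices h : R.d0 r s ∘ₗ (toX as (S.ι (b ⊗ₜ[k] h'))).restrictScalars k =
        (toX (fun i => as i.succ) (S.ι (b ⊗ₜ[k] h')) ∘ₗ right S (S.aE (as 0)) s +
          (∑ i : Fin r, (-1 : ℤ) ^ ((i : ℕ) + 1) • toX (mulAt as i) (S.ι (b ⊗ₜ[k] h'))) +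
          (-1 : ℤ) ^ (r + 1) • toX (fun i => as i.castSucc)
            (S.aE (as (Fin.last r)) * S.ι (b ⊗ₜ[k] h'))).restrictScalars k by
      simpa only [LinearMap.comp_apply, LinearMap.add_apply, LinearMap.sum_apply,
        LinearMap.smul_apply, LinearMap.restrictScalars_apply] using LinearMap.congr_fun h y
    refine hom_ext_ι S fun a h₀ hs => ?_
    choose N v hv using fun i => exists_sRep (k := k) 1 ((Fin.cons h₀ hs : Fin (s + 1) → H) i)
    have hright := right_aE_ι_tmul S a (Fin.cons h₀ hs) (as 0) hv
    simp only [Fin.cons_zero, Fin.cons_succ] at hright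
    simp only [LinearMap.comp_apply, LinearMap.add_apply, LinearMap.sum_apply,
      LinearMap.smul_apply, LinearMap.restrictScalars_apply, hright, map_sum, toX_tmul_tp,
      S.aE_mul_ι]
    exact R.d0_eq r s a h₀ hs as b h' N v hv

theorem sig0_toY_append {s : ℕ} (as : Fin 0 → A) (h : H) (y : RelBar k H E s) :
    R.sig0 s (toY k H E s (append S h s y)) = toX as (S.hE h) y := by
  suffices hh : R.sig0 s ∘ₗ (toY k H E s ∘ₗ append S h s).restrictScalars k =
      (toX as (S.hE h)).restrictScalars k from LinearMap.congr_fun hh y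
  refine hom_ext_ι S fun a h₀ hs => ?_
  obtain rfl : as = fun i => i.elim0 := Subsingleton.elim _ _
  simp only [LinearMap.comp_apply, LinearMap.restrictScalars_apply, append_tmul_tp,
    toY_tmul_tp_snoc, R.sig0_eq, toX_tmul_tp]

theorem sig_toX {r s : ℕ} (as : Fin r → A) (b : A) (h : H) (y : RelBar k H E s) :
    R.sig r s (toX as (S.ι (b ⊗ₜ[k] h)) y) =
      (-1 : ℤ) ^ (r + 1) • toX (Fin.snoc as b : Fin (r + 1) → A) (S.hE h) y := by
  suffices hh : R.sig r s ∘ₗ (toX as (S.ι (b ⊗ₜ[k] h))).restrictScalars k =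
      ((-1 : ℤ) ^ (r + 1) • toX (Fin.snoc as b : Fin (r + 1) → A) (S.hE h)).restrictScalars k from
    LinearMap.congr_fun hh y
  refine hom_ext_ι S fun a h₀ hs => ?_
  simp only [LinearMap.comp_apply, LinearMap.restrictScalars_apply, LinearMap.smul_apply,
    toX_tmul_tp, R.sig_eq]

theorem exists_toX_eq_rX_sig {r s : ℕ} (as : Fin (r + 1) → A) (x : E) (y : RelBar k H E s) :
    ∃ z, toX as x y = rX x (R.sig r s z) := by
  refine ⟨(-1 : ℤ) ^ (r + 1) • toX (Fin.init as) (S.ι (as (Fin.last r) ⊗ₜ[k] 1)) y, ?_⟩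
  rw [map_zsmul, sig_toX, smul_smul, ← mul_pow, neg_one_mul, neg_neg, one_pow, one_smul, S.hE_one,
    rX_toX, one_mul, Fin.snoc_init_self]

theorem mu_sig0 {s : ℕ} (y : Yc k H E s) : R.mu s (R.sig0 s y) = y := by
  suffices h : R.mu s ∘ₗ R.sig0 s = LinearMap.id from LinearMap.congr_fun h y
  refine toY_append_hom_ext S fun h y => ?_
  rw [LinearMap.comp_apply, sig0_toY_append R Fin.elim0, mu_toX]
  exact congrArg (toY k H E s) (LinearMap.congr_fun (right_hE_append_one S h s) y)

theorem mu_toX_ι {s : ℕ} (as : Fin 0 → A) (b : A) (h : H) (y : RelBar k H E s) :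
    R.mu s (toX as (S.ι (b ⊗ₜ[k] h)) y) = toY k H E s (append S h s (right S (S.aE b) s y)) := by
  rw [mu_toX, right_ι_append_one]

theorem sig0_mu_add_d0_sig {s : ℕ} (x : Xc k A H E 0 s) :
    R.sig0 s (R.mu s x) + R.d0 0 s (R.sig 0 s x) = x := by
  suffices h : R.sig0 s ∘ₗ R.mu s + R.d0 0 s ∘ₗ R.sig 0 s = LinearMap.id from
    LinearMap.congr_fun h x
  refine toX_hom_ext_ι S fun as b h y => ?_
  have has (as' : Fin 0 → A) : as' = as := Subsingleton.elim _ _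
  simp only [LinearMap.add_apply, LinearMap.comp_apply, LinearMap.id_apply, mu_toX_ι,
    sig0_toY_append R as, sig_toX, map_zsmul, d0_toX, has, Finset.univ_eq_empty, Finset.sum_empty]
  rw [show (Fin.snoc as b : Fin 1 → A) 0 = b from rfl, Fin.snoc_last, ← S.ι_eq_aE_mul_hE]
  simp

theorem sig_d0_add_d0_sig {r s : ℕ} (x : Xc k A H E (r + 1) s) :
    R.sig r s (R.d0 r s x) + R.d0 (r + 1) s (R.sig (r + 1) s x) = x := by
  suffices h : R.sig r s ∘ₗ R.d0 r s + R.d0 (r + 1) s ∘ₗ R.sig (r + 1) s = LinearMap.id from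
    LinearMap.congr_fun h x
  refine toX_hom_ext_ι S fun as b h y => ?_
  have hzero : (Fin.snoc as b : Fin (r + 2) → A) 0 = as 0 := rfl
  simp only [LinearMap.add_apply, LinearMap.comp_apply, LinearMap.id_apply, sig_toX, d0_toX,
    map_add, map_sum, map_zsmul, S.aE_mul_ι, snoc_comp_succ, hzero, Fin.snoc_last,
    Fin.snoc_castSucc, Fin.sum_univ_castSucc, mulAt_snoc_last, mulAt_snoc_castSucc,
    Fin.val_castSucc, Fin.val_last, ← S.ι_eq_aE_mul_hE, smul_add, Finset.smul_sum, smul_smul]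
  rcases neg_one_pow_eq_or ℤ r with hr | hr <;>
  · simp only [pow_succ, hr, mul_neg, mul_one, neg_neg, one_mul, neg_mul, one_smul, neg_smul,
      Finset.sum_neg_distrib]
    abel

theorem mu_d0 {s : ℕ} (x : Xc k A H E 1 s) : R.mu s (R.d0 0 s x) = 0 := by
  suffices h : R.mu s ∘ₗ R.d0 0 s = 0 from LinearMap.congr_fun h x
  refine toX_hom_ext_ι S fun as b h y => ?_
  simp only [LinearMap.comp_apply, LinearMap.zero_apply, d0_toX, Finset.univ_eq_empty,
    Finset.sum_empty, map_add, map_zsmul, map_zero, S.aE_mul_ι, mu_toX_ι, S.aE_mul, right_mul]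
  simp

theorem d0_d0 {r s : ℕ} (x : Xc k A H E (r + 2) s) : R.d0 r s (R.d0 (r + 1) s x) = 0 := by
  suffices h : ∀ z, R.d0 r s (R.d0 (r + 1) s (R.sig (r + 1) s z)) = 0 by
    suffices hdd : R.d0 r s ∘ₗ R.d0 (r + 1) s = 0 from LinearMap.congr_fun hdd x
    refine toX_hom_ext fun as e y => ?_
    obtain ⟨z, hz⟩ := exists_toX_eq_rX_sig R as e y
    rw [hz, LinearMap.comp_apply, d0_rX, d0_rX, h, map_zero, LinearMap.zero_apply]
  intro z
  rw [eq_sub_of_add_eq' (sig_d0_add_d0_sig R z), map_sub, sub_eq_zero, eq_comm]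
  clear x
  cases r with
  | zero =>
    have h := sig0_mu_add_d0_sig R (R.d0 0 s z)
    rwa [mu_d0, map_zero, zero_add] at h
  | succ r =>
    have h := sig_d0_add_d0_sig R (R.d0 (r + 1) s z)
    have hdd : R.d0 r s (R.d0 (r + 1) s z) = 0 := d0_d0 z
    rwa [hdd, map_zero, zero_add] at h

theorem mu_smul {s : ℕ} (e : E) (x : Xc k A H E 0 s) : R.mu s (e • x) = e • R.mu s x := by
  suffices h : R.mu s ∘ₗ lX e = lY e ∘ₗ R.mu s by
    simpa only [LinearMap.comp_apply, lX_apply, lY_apply] using LinearMap.congr_fun h x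
  refine toX_hom_ext fun as x y => ?_
  simp only [LinearMap.comp_apply, lX_apply, lY_apply, ← map_smul, mu_toX]

theorem sig_smul {r s : ℕ} (e : E) (x : Xc k A H E r s) : R.sig r s (e • x) = e • R.sig r s x := by
  suffices h : R.sig r s ∘ₗ lX e = lX e ∘ₗ R.sig r s by
    simpa only [LinearMap.comp_apply, lX_apply] using LinearMap.congr_fun h x
  refine toX_hom_ext_ι S fun as b h y => ?_
  simp only [LinearMap.comp_apply, lX_apply, ← map_smul, sig_toX]
  rw [map_smul, smul_comm]

theorem sig0_smul {s : ℕ} (e : E) (y : Yc k H E s) : R.sig0 s (e • y) = e • R.sig0 s y := by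
  suffices h : R.sig0 s ∘ₗ lY e = lX e ∘ₗ R.sig0 s by
    simpa only [LinearMap.comp_apply, lX_apply, lY_apply] using LinearMap.congr_fun h y
  refine toY_append_hom_ext S fun h y => ?_
  simp only [LinearMap.comp_apply, lX_apply, lY_apply, ← map_smul, sig0_toY_append R Fin.elim0]

theorem del_smul {s : ℕ} (e : E) (y : Yc k H E (s + 1)) : R.del s (e • y) = e • R.del s y := by
  obtain ⟨y, rfl⟩ := toY_surjective (s + 1) y
  simp only [← map_smul, del_toY]

end Rows

section Columns

variable {k A H E : Type} [CommRing k] [Ring A] [Algebra k A] [Ring H] [HopfAlgebra k H]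
  [Ring E] [Algebra k E] {S : CrossedProduct k A H E} (R : ResData k A H E S)

open RelBar

/-- Right multiplication by `e ∈ E` on `Y_s`, transported from `X_{0s}` along `μ_s`. -/
def ResData.rY (e : E) (s : ℕ) : Yc k H E s →ₗ[k] Yc k H E s := R.mu s ∘ₗ rX e ∘ₗ R.sig0 s

theorem mu_rX {s : ℕ} (e : E) (x : Xc k A H E 0 s) : R.mu s (rX e x) = R.rY e s (R.mu s x) := by
  conv_lhs => rw [← sig0_mu_add_d0_sig R x]
  rw [map_add, map_add, ← d0_rX, mu_d0, add_zero]
  rfl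

theorem rY_toY {s : ℕ} (e : E) (y : RelBar k H E (s + 1)) :
    R.rY e s (toY k H E s y) = toY k H E s (right S e (s + 1) y) := by
  suffices h : R.rY e s ∘ₗ (toY k H E s).restrictScalars k =
      (toY k H E s ∘ₗ right S e (s + 1)).restrictScalars k from LinearMap.congr_fun h y
  refine append_hom_ext S fun h y => ?_
  have happend : right S (S.hE h) (s + 1) (append S 1 s y) = append S h s y :=
    LinearMap.congr_fun (right_hE_append_one S h s) y
  simp only [LinearMap.comp_apply, LinearMap.restrictScalars_apply, ResData.rY]
  rw [sig0_toY_append R Fin.elim0, rX_toX, mu_toX, right_mul, LinearMap.comp_apply, happend]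

theorem del_rY {s : ℕ} (e : E) (y : Yc k H E (s + 1)) :
    R.del s (R.rY e (s + 1) y) = R.rY e s (R.del s y) := by
  obtain ⟨y, rfl⟩ := toY_surjective (s + 1) y
  rw [rY_toY, del_toY, del_toY, rY_toY, d_right]

theorem del_del {s : ℕ} (y : Yc k H E (s + 2)) : R.del s (R.del (s + 1) y) = 0 := by
  obtain ⟨y, rfl⟩ := toY_surjective (s + 2) y
  rw [del_toY, del_toY, show d S (s + 1) (d S (s + 2) y) = 0 from
    LinearMap.congr_fun (d_comp_d S (s + 1)) y, map_zero]

section ColumnHomotopy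

variable {sY : ∀ s : ℕ, Yc k H E s →ₗ[k] Yc k H E (s + 1)}
  (hsY : ∀ (s : ℕ) (e : E) (hs : Fin s → H) (h : H),
    sY s (ygen e hs h) = ((-1 : ℤ) ^ s) • ygen e (Fin.snoc hs h) 1)

include hsY

theorem sY_toY (S : CrossedProduct k A H E) {s : ℕ} (y : RelBar k H E (s + 1)) :
    sY s (toY k H E s y) = (-1 : ℤ) ^ s • toY k H E (s + 1) (append S 1 (s + 1) y) := by
  suffices h : sY s ∘ₗ (toY k H E s).restrictScalars k =
      ((-1 : ℤ) ^ s • toY k H E (s + 1) ∘ₗ append S 1 (s + 1)).restrictScalars k from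
    LinearMap.congr_fun h y
  refine hom_ext_ι S fun a h₀ hs => ?_
  rw [← Fin.snoc_init_self hs]
  simp only [LinearMap.comp_apply, LinearMap.restrictScalars_apply, LinearMap.smul_apply,
    append_tmul_tp, toY_tmul_tp_snoc, hsY]

theorem sY_smul (S : CrossedProduct k A H E) {s : ℕ} (e : E) (y : Yc k H E s) :
    sY s (e • y) = e • sY s y := by
  obtain ⟨y, rfl⟩ := toY_surjective s y
  rw [← map_smul, sY_toY hsY S, sY_toY hsY S, map_smul, map_smul, smul_comm]

theorem sY_del_add_del_sY {s : ℕ} (y : Yc k H E (s + 1)) :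
    sY s (R.del s y) + R.del (s + 1) (sY (s + 1) y) = y := by
  obtain ⟨y, rfl⟩ := toY_surjective (s + 1) y
  simp only [del_toY, sY_toY hsY S, map_zsmul, d_append_one, map_add, smul_add, smul_smul]
  rw [← mul_pow]
  simp [pow_succ]

end ColumnHomotopy

section Augmentation

variable (k H E) in
/-- The identification `e ⊗ 1 ↦ e` of the degree `0` part of the bar complex with `E`. -/
def RelBar.toE : RelBar k H E 0 ≃ₗ[E] E :=
  TensorProduct.AlgebraTensorModule.congr (LinearEquiv.refl E E) (tpowNil k H).symm ≪≫ₗ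
    TensorProduct.AlgebraTensorModule.rid k E E

theorem toE_tmul_tp (e : E) (hs : Fin 0 → H) : toE k H E (e ⊗ₜ[k] tp k hs) = e := by
  simp [toE, tp_zero]

theorem toE_d_zero_tmul_tp (e : E) (hs : Fin 1 → H) :
    toE k H E (d S 0 (e ⊗ₜ[k] tp k hs)) = -(e * S.hE (hs 0)) := by
  rw [tp_succ]
  simp [d, face_zero, desc_tmul, TensorProduct.smul_tmul', toE_tmul_tp]

variable {mutil : Yc k H E 0 →ₗ[k] E}
  (hmutil : ∀ (a : A) (h₀ h₁ : H) (N M' : ℕ) (u : Fin N → Fin 2 → H) (v : Fin M' → Fin 2 → H),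
    SRep k 1 h₀ N u → SRep k 1 h₁ M' v →
    mutil (ygen (S.ι (a ⊗ₜ[k] h₀)) (fun i : Fin 0 => i.elim0) h₁) =
      -∑ i, ∑ j, S.ι ((a * S.f (u i 0) (v j 0)) ⊗ₜ[k] (u i 1 * v j 1)))
  {σm : E →ₗ[k] Yc k H E 0} (hσm : ∀ e, σm e = -ygen e (fun i : Fin 0 => i.elim0) 1)

include hmutil in
theorem mutil_toY (y : RelBar k H E 1) : mutil (toY k H E 0 y) = toE k H E (d S 0 y) := by
  suffices h : mutil ∘ₗ (toY k H E 0).restrictScalars k =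
      ((toE k H E).toLinearMap ∘ₗ d S 0).restrictScalars k from LinearMap.congr_fun h y
  refine hom_ext_ι S fun a h₀ hs => ?_
  obtain ⟨N, u, hu⟩ := exists_sRep (k := k) 1 h₀
  obtain ⟨M, v, hv⟩ := exists_sRep (k := k) 1 (hs 0)
  simp only [LinearMap.comp_apply, LinearMap.restrictScalars_apply, LinearEquiv.coe_coe]
  rw [toY_tmul_tp, toE_d_zero_tmul_tp, S.ι_mul_hE a hu hv, ← hmutil a h₀ (hs 0) N M u v hu hv]
  congr 2

include hσm in
theorem σm_toE (S : CrossedProduct k A H E) (y : RelBar k H E 0) :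
    σm (toE k H E y) = -toY k H E 0 (append S 1 0 y) := by
  suffices h : σm ∘ₗ (toE k H E).toLinearMap.restrictScalars k =
      (-toY k H E 0 ∘ₗ append S 1 0).restrictScalars k from LinearMap.congr_fun h y
  refine hom_ext_ι S fun a h₀ hs => ?_
  simp only [LinearMap.comp_apply, LinearMap.restrictScalars_apply, LinearEquiv.coe_coe,
    LinearMap.neg_apply, append_tmul_tp, toY_tmul_tp_snoc, toE_tmul_tp, hσm]
  congr 2
  exact Subsingleton.elim _ _

include hmutil hσm in
theorem mutil_σm (e : E) : mutil (σm e) = e := by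
  obtain ⟨y, rfl⟩ := (toE k H E).surjective e
  rw [σm_toE hσm S, map_neg, mutil_toY hmutil, d_zero_append_one, map_neg, neg_neg]

include hmutil hσm in
theorem σm_mutil_add_del_sY {sY : ∀ s : ℕ, Yc k H E s →ₗ[k] Yc k H E (s + 1)}
    (hsY : ∀ (s : ℕ) (e : E) (hs : Fin s → H) (h : H),
      sY s (ygen e hs h) = ((-1 : ℤ) ^ s) • ygen e (Fin.snoc hs h) 1) (y : Yc k H E 0) :
    σm (mutil y) + R.del 0 (sY 0 y) = y := by
  obtain ⟨y, rfl⟩ := toY_surjective 0 y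
  rw [mutil_toY hmutil, σm_toE hσm S, sY_toY hsY S, map_zsmul, del_toY, d_append_one]
  simp

include hσm in
theorem σm_smul (e e' : E) : σm (e • e') = e • σm e' := by
  rw [hσm, hσm, smul_neg]
  rfl

include hmutil in
theorem mutil_mu {mult : Xc k A H E 0 0 →ₗ[k] E}
    (hmult : ∀ e e' : E,
      mult (xgen e (fun i : Fin 0 => i.elim0) (fun i : Fin 0 => i.elim0) e') = e * e')
    (x : Xc k A H E 0 0) : mutil (R.mu 0 x) = -mult x := by
  suffices h : mutil ∘ₗ R.mu 0 = -mult from LinearMap.congr_fun h x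
  refine toX_hom_ext fun as x y => ?_
  obtain rfl : as = fun i => i.elim0 := Subsingleton.elim _ _
  suffices h : (mutil ∘ₗ R.mu 0) ∘ₗ (toX (fun i => i.elim0) x).restrictScalars k =
      -mult ∘ₗ (toX (fun i => i.elim0) x).restrictScalars k from LinearMap.congr_fun h y
  refine hom_ext_ι S fun a h₀ hs => ?_
  obtain rfl : hs = fun i => i.elim0 := Subsingleton.elim _ _
  simp only [LinearMap.comp_apply, LinearMap.restrictScalars_apply, LinearMap.neg_apply]
  rw [mu_toX, mutil_toY hmutil, d_right, d_zero_append_one, map_neg, map_neg, tp_zero,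
    right_zero_tmul, ← tp_zero (fun i => i.elim0), toE_tmul_tp, toX_tmul_tp, hmult]

end Augmentation

end Columns

section Perturbation

variable {k V : Type*} [CommRing k] [AddCommGroup V] [Module k V] {d D h : Module.End k V}
  (hdh : ∀ z, d (h z) + h (d z) = z) (hdd : ∀ z, d (d z) = 0)
  (hinj : ∀ z, z + h (D z) = 0 → z = 0)

include hdh in
theorem add_htpy_pert (z : V) : z + h (D z) = h ((d + D) z) + d (h z) := by
  nth_rw 1 [← hdh z]
  rw [LinearMap.add_apply, map_add]
  abel

include hdh hdd hinj in
theorem sq_eq_zero_of_pert_eq {x : V} (hx : D x = -h (D ((d + D) x)))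
    (hx3 : (d + D) ((d + D) ((d + D) x)) = 0) : (d + D) ((d + D) x) = 0 := by
  have hd : d (x - h ((d + D) x)) = h ((d + D) ((d + D) x)) := by
    rw [map_sub, sub_eq_iff_eq_add, ← add_htpy_pert hdh, ← neg_eq_iff_eq_neg.mpr hx,
      LinearMap.add_apply, add_neg_cancel_right]
  apply hinj
  rw [add_htpy_pert hdh, hx3, map_zero, zero_add, ← hd, hdd]

include hdh hdd hinj in
/-- The perturbation lemma: `ht` says that `t` is `(1 + h D)⁻¹ h`. -/
theorem htpy_of_pert {t : Module.End k V} (hsq : ∀ z, (d + D) ((d + D) z) = 0)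
    (ht : ∀ z, t z = h z - h (D (t z))) (z : V) : (d + D) (t z) + t ((d + D) z) = z := by
  have key (z : V) : h ((d + D) (t z)) + d (h (t z)) = h z := by
    rw [← add_htpy_pert hdh, ← eq_sub_iff_add_eq, ← ht]
  have hd : d (h ((d + D) (t z))) = d (h z) := by
    rw [eq_sub_of_add_eq (key z), map_sub, hdd, sub_zero]
  refine sub_eq_zero.mp (hinj _ ?_)
  rw [add_htpy_pert hdh, map_sub, map_add, hsq, zero_add, map_sub, ← key ((d + D) z), map_sub,
    map_add, map_sub, map_add, hd]
  abel

theorem eq_zero_of_add_apply_eq_zero {N : Module.End k V} (hN : N.maxGenEigenspace 0 = ⊤) {z : V}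
    (hz : z + N z = 0) : z = 0 := by
  obtain ⟨m, hm⟩ := N.mem_maxGenEigenspace 0 z |>.mp (hN ▸ Submodule.mem_top)
  rw [zero_smul, sub_zero] at hm
  have hpow (m : ℕ) : (N ^ m) z = (-1 : ℤ) ^ m • z := by
    induction m with
    | zero => simp
    | succ m ih =>
      rw [pow_succ', Module.End.mul_apply, ih, map_zsmul, eq_neg_of_add_eq_zero_right hz, pow_succ,
        mul_neg_one, smul_neg, neg_smul]
  rcases neg_one_pow_eq_or ℤ m with h | h <;> simpa [h, hm, eq_comm] using hpow m

end Perturbation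

section Total

variable (k A H E : Type) [CommRing k] [Ring A] [Algebra k A] [Ring H] [HopfAlgebra k H]
  [Ring E] [Algebra k E]

/-- The sum of all the `X_{rs}` and all the `Y_s`, where `Y_s` augments the `s`-th row. -/
def Tot : Type := (⨁ p : ℕ × ℕ, Xc k A H E p.1 p.2) × ⨁ s : ℕ, Yc k H E s

namespace Tot

instance : AddCommGroup (Tot k A H E) :=
  inferInstanceAs (AddCommGroup ((⨁ p : ℕ × ℕ, Xc k A H E p.1 p.2) × ⨁ s : ℕ, Yc k H E s))

instance : Module k (Tot k A H E) :=
  inferInstanceAs (Module k ((⨁ p : ℕ × ℕ, Xc k A H E p.1 p.2) × ⨁ s : ℕ, Yc k H E s))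

instance : Module E (Tot k A H E) :=
  inferInstanceAs (Module E ((⨁ p : ℕ × ℕ, Xc k A H E p.1 p.2) × ⨁ s : ℕ, Yc k H E s))

instance : IsScalarTower k E (Tot k A H E) :=
  inferInstanceAs (IsScalarTower k E
    ((⨁ p : ℕ × ℕ, Xc k A H E p.1 p.2) × ⨁ s : ℕ, Yc k H E s))

variable {H E}

/-- The inclusion of `X_{rs}` in `Tot`. -/
def ofX (r s : ℕ) : Xc k A H E r s →ₗ[k] Tot k A H E :=
  LinearMap.inl k (⨁ p : ℕ × ℕ, Xc k A H E p.1 p.2) (⨁ s : ℕ, Yc k H E s) ∘ₗ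
    lof k (ℕ × ℕ) (fun p => Xc k A H E p.1 p.2) (r, s)

/-- The inclusion of `Y_s` in `Tot`. -/
def ofY (s : ℕ) : Yc k H E s →ₗ[k] Tot k A H E :=
  LinearMap.inr k (⨁ p : ℕ × ℕ, Xc k A H E p.1 p.2) (⨁ s : ℕ, Yc k H E s) ∘ₗ
    lof k ℕ (fun s => Yc k H E s) s

variable {k A}

theorem smul_ofX (e : E) {r s : ℕ} (x : Xc k A H E r s) :
    e • ofX k A r s x = ofX k A r s (e • x) := by
  refine Prod.ext ?_ (smul_zero _)
  exact (map_smul (lof E (ℕ × ℕ) (fun p => Xc k A H E p.1 p.2) (r, s)) e x).symm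

theorem smul_ofY (e : E) {s : ℕ} (y : Yc k H E s) : e • ofY k A s y = ofY k A s (e • y) := by
  refine Prod.ext (smul_zero _) ?_
  exact (map_smul (lof E ℕ (fun s => Yc k H E s) s) e y).symm

theorem ofX_xcast {r r' s s' : ℕ} (hr : r = r') (hs : s = s') (x : Xc k A H E r s) :
    ofX k A r' s' (xcast hr hs x) = ofX k A r s x := by
  subst hr hs
  rfl

@[elab_as_elim]
theorem induction_on {p : Tot k A H E → Prop} (z : Tot k A H E)
    (ofX : ∀ r s x, p (ofX k A r s x)) (ofY : ∀ s y, p (ofY k A s y))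
    (add : ∀ z w, p z → p w → p (z + w)) : p z := by
  have hzero : p 0 := by simpa only [map_zero] using ofY 0 0
  have hX (x : ⨁ p : ℕ × ℕ, Xc k A H E p.1 p.2) : p (LinearMap.inl k _ _ x) := by
    induction x using DirectSum.induction_on with
    | zero => rwa [map_zero]
    | of i x => exact ofX i.1 i.2 x
    | add x y hx hy => rw [map_add]; exact add _ _ hx hy
  have hY (y : ⨁ s : ℕ, Yc k H E s) : p (LinearMap.inr k _ _ y) := by
    induction y using DirectSum.induction_on with
    | zero => rwa [map_zero]
    | of i y => exact ofY i y
    | add x y hx hy => rw [map_add]; exact add _ _ hx hy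
  convert add _ _ (hX z.1) (hY z.2)
  exact (Prod.fst_add_snd z).symm

variable {M : Type} [AddCommGroup M] [Module k M] (f : ∀ r s, Xc k A H E r s →ₗ[k] M)
  (g : ∀ s, Yc k H E s →ₗ[k] M)

/-- The linear map on `Tot` with restrictions `f` to the `X_{rs}` and `g` to the `Y_s`. -/
def lift : Tot k A H E →ₗ[k] M :=
  LinearMap.coprod (M := ⨁ p : ℕ × ℕ, Xc k A H E p.1 p.2) (M₂ := ⨁ s : ℕ, Yc k H E s)
    (toModule k (ℕ × ℕ) M fun p => f p.1 p.2) (toModule k ℕ M g)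

theorem lift_ofX {r s : ℕ} (x : Xc k A H E r s) : lift f g (ofX k A r s x) = f r s x :=
  (congr_arg₂ (· + ·) (toModule_lof (M := fun p : ℕ × ℕ => Xc k A H E p.1 p.2) k
    (φ := fun p => f p.1 p.2) (r, s) x) (map_zero (toModule k ℕ M g))).trans (add_zero _)

theorem lift_ofY {s : ℕ} (y : Yc k H E s) : lift f g (ofY k A s y) = g s y :=
  (congr_arg₂ (· + ·) (map_zero (toModule k (ℕ × ℕ) M fun p => f p.1 p.2))
    (toModule_lof k (φ := g) s y)).trans (zero_add _)

variable (k A H E) in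
/-- The span of the `X_{rs}`, for all `r`, and of `Y_s`. -/
def column (s : ℕ) : Submodule k (Tot k A H E) :=
  (⨆ r, LinearMap.range (ofX k A r s)) ⊔ LinearMap.range (ofY k A s)

theorem ofX_mem_column {r s : ℕ} (x : Xc k A H E r s) : ofX k A r s x ∈ column k A H E s :=
  Submodule.mem_sup_left (Submodule.mem_iSup_of_mem r ⟨x, rfl⟩)

theorem ofY_mem_column {s : ℕ} (y : Yc k H E s) : ofY k A s y ∈ column k A H E s :=
  Submodule.mem_sup_right ⟨y, rfl⟩

theorem column_le {s : ℕ} {P : Submodule k (Tot k A H E)} (hX : ∀ r x, ofX k A r s x ∈ P)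
    (hY : ∀ y, ofY k A s y ∈ P) : column k A H E s ≤ P :=
  sup_le (iSup_le fun r => LinearMap.range_le_iff_comap.mpr (eq_top_iff.mpr fun x _ => hX r x))
    (LinearMap.range_le_iff_comap.mpr (eq_top_iff.mpr fun y _ => hY y))

end Tot

end Total

section TotalDifferential

variable {k A H E : Type} [CommRing k] [Ring A] [Algebra k A] [Ring H] [HopfAlgebra k H]
  [Ring E] [Algebra k E] {S : CrossedProduct k A H E} (R : ResData k A H E S)

open Tot

namespace ResData

/-- The restriction of `totDl` to `X_{rs}`. -/
def totDlX : ∀ _ r s : ℕ, Xc k A H E r s →ₗ[k] Tot k A H E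
  | 0, 0, s => ofY k A s ∘ₗ R.mu s
  | l, r, s => ofX k A (r + l - 1) (s - l) ∘ₗ R.dl l r s

/-- The restriction of `totDl` to `Y_s`. -/
def totDlY : ∀ _ s : ℕ, Yc k H E s →ₗ[k] Tot k A H E
  | 1, s + 1 => ofY k A s ∘ₗ R.del s
  | _, _ => 0

/-- The summand `d^l` of the differential of `Tot`. With `Y_s` in position `(-1, s)`, the maps
`μ_s` are part of `d^0` and the maps `∂_s` of `d^1`. On `X_{rs}` and `Y_s` it is a junk value if
`l > s`, as `s - l` truncates. -/
def totDl (l : ℕ) : Module.End k (Tot k A H E) := lift (R.totDlX l) (R.totDlY l)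

/-- The perturbation `∑_{l > 0} d^l` of the row differential `d^0`. -/
def totPert : Module.End k (Tot k A H E) :=
  lift (fun r s => ∑ l ∈ Finset.range s, R.totDl (l + 1) ∘ₗ ofX k A r s)
    (fun s => ∑ l ∈ Finset.range s, R.totDl (l + 1) ∘ₗ ofY k A s)

/-- The homotopy `σ⁰` of the augmented rows. -/
def totSig : Module.End k (Tot k A H E) :=
  lift (fun r s => ofX k A (r + 1) s ∘ₗ R.sig r s) (fun s => ofX k A 0 s ∘ₗ R.sig0 s)

/-- Right multiplication by `e`. -/
def totRight (e : E) : Module.End k (Tot k A H E) :=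
  lift (fun r s => ofX k A r s ∘ₗ rX e) (fun s => ofY k A s ∘ₗ R.rY e s)

end ResData

theorem totDl_ofX {l r s : ℕ} (h : 0 < r + l) (x : Xc k A H E r s) :
    R.totDl l (ofX k A r s x) = ofX k A (r + l - 1) (s - l) (R.dl l r s x) := by
  rw [ResData.totDl, lift_ofX]
  match l, r with
  | l + 1, r => rfl
  | 0, r + 1 => rfl

theorem totDl_zero_ofX_zero {s : ℕ} (x : Xc k A H E 0 s) :
    R.totDl 0 (ofX k A 0 s x) = ofY k A s (R.mu s x) := by
  rw [ResData.totDl, lift_ofX]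
  rfl

theorem totDl_zero_ofX_succ {r s : ℕ} (x : Xc k A H E (r + 1) s) :
    R.totDl 0 (ofX k A (r + 1) s x) = ofX k A r s (R.d0 r s x) := totDl_ofX R (by simp) x

theorem totDl_ofY {l s : ℕ} (h : l ≠ 1) (y : Yc k H E s) : R.totDl l (ofY k A s y) = 0 := by
  rw [ResData.totDl, lift_ofY]
  match l with
  | 0 => rfl
  | l + 2 => rfl

theorem totDl_one_ofY_zero (y : Yc k H E 0) : R.totDl 1 (ofY k A 0 y) = 0 := by
  rw [ResData.totDl, lift_ofY]
  rfl

theorem totDl_one_ofY_succ {s : ℕ} (y : Yc k H E (s + 1)) :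
    R.totDl 1 (ofY k A (s + 1) y) = ofY k A s (R.del s y) := by
  rw [ResData.totDl, lift_ofY]
  rfl

theorem totSig_ofX {r s : ℕ} (x : Xc k A H E r s) :
    R.totSig (ofX k A r s x) = ofX k A (r + 1) s (R.sig r s x) := by
  rw [ResData.totSig, lift_ofX]
  rfl

theorem totSig_ofY {s : ℕ} (y : Yc k H E s) :
    R.totSig (ofY k A s y) = ofX k A 0 s (R.sig0 s y) := by
  rw [ResData.totSig, lift_ofY]
  rfl

theorem totRight_ofX (e : E) {r s : ℕ} (x : Xc k A H E r s) :
    R.totRight e (ofX k A r s x) = ofX k A r s (rX e x) := by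
  rw [ResData.totRight, lift_ofX]
  rfl

theorem totRight_ofY (e : E) {s : ℕ} (y : Yc k H E s) :
    R.totRight e (ofY k A s y) = ofY k A s (R.rY e s y) := by
  rw [ResData.totRight, lift_ofY]
  rfl

theorem totPert_of_mem_column {s : ℕ} {z : Tot k A H E} (hz : z ∈ column k A H E s) :
    R.totPert z = ∑ l ∈ Finset.range s, R.totDl (l + 1) z := by
  suffices h : column k A H E s ≤
      LinearMap.eqLocus R.totPert (∑ l ∈ Finset.range s, R.totDl (l + 1)) by
    simpa only [LinearMap.mem_eqLocus, LinearMap.sum_apply] using h hz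
  refine column_le (fun r x => ?_) fun y => ?_
  · rw [LinearMap.mem_eqLocus, ResData.totPert, lift_ofX, LinearMap.sum_apply, LinearMap.sum_apply]
    rfl
  · rw [LinearMap.mem_eqLocus, ResData.totPert, lift_ofY, LinearMap.sum_apply, LinearMap.sum_apply]
    rfl

theorem totDl_mem_column (l : ℕ) {s : ℕ} {z : Tot k A H E} (hz : z ∈ column k A H E s) :
    R.totDl l z ∈ column k A H E (s - l) := by
  suffices h : column k A H E s ≤ (column k A H E (s - l)).comap (R.totDl l) from h hz
  refine column_le (fun r x => ?_) fun y => ?_ <;> rw [Submodule.mem_comap]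
  · obtain h | h := (Nat.zero_le (r + l)).lt_or_eq
    · rw [totDl_ofX R h]
      exact ofX_mem_column _
    · obtain ⟨rfl, rfl⟩ : r = 0 ∧ l = 0 := by omega
      rw [totDl_zero_ofX_zero]
      exact ofY_mem_column _
  · by_cases h : l = 1
    · subst h
      cases s with
      | zero => rw [totDl_one_ofY_zero]; exact zero_mem _
      | succ s => rw [totDl_one_ofY_succ]; exact ofY_mem_column _
    · rw [totDl_ofY R h]
      exact zero_mem _

theorem totSig_mem_column {s : ℕ} {z : Tot k A H E} (hz : z ∈ column k A H E s) :
    R.totSig z ∈ column k A H E s := by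
  suffices h : column k A H E s ≤ (column k A H E s).comap R.totSig from h hz
  refine column_le (fun r x => ?_) fun y => ?_ <;> rw [Submodule.mem_comap]
  · rw [totSig_ofX]
    exact ofX_mem_column _
  · rw [totSig_ofY]
    exact ofX_mem_column _

theorem totDl_zero_totSig_add (z : Tot k A H E) :
    R.totDl 0 (R.totSig z) + R.totSig (R.totDl 0 z) = z := by
  induction z using Tot.induction_on with
  | ofX r s x =>
    cases r with
    | zero =>
      rw [totSig_ofX, totDl_zero_ofX_succ, totDl_zero_ofX_zero, totSig_ofY, ← map_add, add_comm,
        sig0_mu_add_d0_sig]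
    | succ r =>
      rw [totSig_ofX, totDl_zero_ofX_succ, totDl_zero_ofX_succ, totSig_ofX, ← map_add]
      exact congr_arg _ ((add_comm _ _).trans (sig_d0_add_d0_sig R x))
  | ofY s y =>
    rw [totSig_ofY, totDl_zero_ofX_zero, totDl_ofY R zero_ne_one, map_zero, add_zero, mu_sig0]
  | add z w hz hw =>
    simp only [map_add]
    rw [add_add_add_comm, hz, hw]

theorem totDl_zero_totDl_zero (z : Tot k A H E) : R.totDl 0 (R.totDl 0 z) = 0 := by
  induction z using Tot.induction_on with
  | ofX r s x =>
    match r with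
    | 0 => rw [totDl_zero_ofX_zero, totDl_ofY R zero_ne_one]
    | 1 => rw [totDl_zero_ofX_succ, totDl_zero_ofX_zero, mu_d0, map_zero]
    | r + 2 => rw [totDl_zero_ofX_succ, totDl_zero_ofX_succ, d0_d0, map_zero]
  | ofY s y => rw [totDl_ofY R zero_ne_one, map_zero]
  | add z w hz hw => rw [map_add, map_add, hz, hw, add_zero]

theorem eq_zero_of_add_totSig_totPert {z : Tot k A H E} (hz : z + R.totSig (R.totPert z) = 0) :
    z = 0 := by
  refine eq_zero_of_add_apply_eq_zero (N := R.totSig * R.totPert) ?_ hz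
  have hcol (s : ℕ) : column k A H E s ≤ (R.totSig * R.totPert).maxGenEigenspace 0 := by
    induction s using Nat.strong_induction_on with
    | _ s ih =>
      intro z hz
      have hN : (R.totSig * R.totPert) z ∈ (R.totSig * R.totPert).maxGenEigenspace 0 := by
        rw [Module.End.mul_apply, totPert_of_mem_column R hz, map_sum]
        refine sum_mem fun l hl =>
          ih (s - (l + 1)) ?_ (totSig_mem_column R (totDl_mem_column R _ hz))
        have := Finset.mem_range.mp hl
        omega
      obtain ⟨m, hm⟩ := (Module.End.mem_maxGenEigenspace _ _ _).mp hN
      refine (Module.End.mem_maxGenEigenspace _ _ _).mpr ⟨m + 1, ?_⟩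
      rw [zero_smul, sub_zero] at hm ⊢
      rwa [pow_succ, Module.End.mul_apply]
  refine eq_top_iff.mpr fun z _ => ?_
  induction z using Tot.induction_on with
  | ofX r s x => exact hcol s (ofX_mem_column x)
  | ofY s y => exact hcol s (ofY_mem_column y)
  | add z w hz hw => exact add_mem (hz trivial) (hw trivial)

/-- The recursion `z_l = -∑_{i<l} σ⁰ d^{l-i} z_i` defines both `z_l = d^l x`, for `x` a generator,
and `z_l = σ^l x`. -/
theorem sum_eq_of_recursion {s : ℕ} {z : ℕ → Tot k A H E}
    (hcol : ∀ l, z l ∈ column k A H E (s - l))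
    (hz : ∀ l, 1 ≤ l → l ≤ s → z l = -∑ i ∈ Finset.range l, R.totSig (R.totDl (l - i) (z i))) :
    ∑ l ∈ Finset.range (s + 1), z l =
      z 0 - R.totSig (R.totPert (∑ l ∈ Finset.range (s + 1), z l)) := by
  have hpert : R.totSig (R.totPert (∑ l ∈ Finset.range (s + 1), z l)) =
      ∑ l ∈ Finset.range s, ∑ i ∈ Finset.range (l + 1),
        R.totSig (R.totDl (l + 1 - i) (z i)) := by
    simp only [map_sum, totPert_of_mem_column R (hcol _)]
    rw [Finset.sum_range_succ, Nat.sub_self, Finset.sum_range_zero, add_zero,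
      ← Finset.sum_range_diag_flip s fun i m => R.totSig (R.totDl (m + 1) (z i))]
    refine Finset.sum_congr rfl fun l _ => Finset.sum_congr rfl fun i hi => ?_
    rw [Nat.sub_add_comm (Finset.mem_range_succ_iff.mp hi)]
  rw [hpert, Finset.sum_range_succ', add_comm, sub_eq_add_neg, ← Finset.sum_neg_distrib]
  congr 1
  refine Finset.sum_congr rfl fun l hl => hz (l + 1) (by omega) ?_
  exact Finset.mem_range.mp hl

end TotalDifferential

section TotalDifferentialSquared

variable {k A H E : Type} [CommRing k] [Ring A] [Algebra k A] [Ring H] [HopfAlgebra k H]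
  [Ring E] [Algebra k E] {S : CrossedProduct k A H E} (R : ResData k A H E S)

open Tot

theorem totDl_smul (l : ℕ) (e : E) (z : Tot k A H E) : R.totDl l (e • z) = e • R.totDl l z := by
  induction z using Tot.induction_on with
  | ofX r s x =>
    obtain h | h := (Nat.zero_le (r + l)).lt_or_eq
    · have := LinearMap.congr_fun (R.dl_lmul l r s e) x
      simp only [LinearMap.comp_apply, lX_apply] at this
      rw [smul_ofX, totDl_ofX R h, totDl_ofX R h, smul_ofX, this]
    · obtain ⟨rfl, rfl⟩ : r = 0 ∧ l = 0 := by omega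
      rw [smul_ofX, totDl_zero_ofX_zero, totDl_zero_ofX_zero, smul_ofY, mu_smul]
  | ofY s y =>
    by_cases h : l = 1
    · subst h
      cases s with
      | zero => rw [smul_ofY, totDl_one_ofY_zero, totDl_one_ofY_zero, smul_zero]
      | succ s => rw [smul_ofY, totDl_one_ofY_succ, totDl_one_ofY_succ, smul_ofY, del_smul]
    · rw [smul_ofY, totDl_ofY R h, totDl_ofY R h, smul_zero]
  | add z w hz hw => rw [smul_add, map_add, hz, hw, map_add, smul_add]

theorem totPert_smul (e : E) (z : Tot k A H E) : R.totPert (e • z) = e • R.totPert z := by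
  induction z using Tot.induction_on with
  | ofX r s x =>
    simp only [smul_ofX e x, totPert_of_mem_column R (ofX_mem_column _), Finset.smul_sum,
      ← totDl_smul]
  | ofY s y =>
    simp only [smul_ofY e y, totPert_of_mem_column R (ofY_mem_column _), Finset.smul_sum,
      ← totDl_smul]
  | add z w hz hw => rw [smul_add, map_add, hz, hw, map_add, smul_add]

theorem totSig_smul (e : E) (z : Tot k A H E) : R.totSig (e • z) = e • R.totSig z := by
  induction z using Tot.induction_on with
  | ofX r s x => rw [smul_ofX, totSig_ofX, totSig_ofX, smul_ofX, sig_smul]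
  | ofY s y => rw [smul_ofY, totSig_ofY, totSig_ofY, smul_ofX, sig0_smul]
  | add z w hz hw => rw [smul_add, map_add, hz, hw, map_add, smul_add]

theorem totDl_totRight (l : ℕ) (e : E) (z : Tot k A H E) :
    R.totDl l (R.totRight e z) = R.totRight e (R.totDl l z) := by
  induction z using Tot.induction_on with
  | ofX r s x =>
    obtain h | h := (Nat.zero_le (r + l)).lt_or_eq
    · have := LinearMap.congr_fun (R.dl_rmul l r s e) x
      simp only [LinearMap.comp_apply] at this
      rw [totRight_ofX, totDl_ofX R h, totDl_ofX R h, totRight_ofX, this]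
    · obtain ⟨rfl, rfl⟩ : r = 0 ∧ l = 0 := by omega
      rw [totRight_ofX, totDl_zero_ofX_zero, totDl_zero_ofX_zero, totRight_ofY, mu_rX]
  | ofY s y =>
    by_cases h : l = 1
    · subst h
      cases s with
      | zero => rw [totRight_ofY, totDl_one_ofY_zero, totDl_one_ofY_zero, map_zero]
      | succ s => rw [totRight_ofY, totDl_one_ofY_succ, totDl_one_ofY_succ, totRight_ofY, del_rY]
    · rw [totRight_ofY, totDl_ofY R h, totDl_ofY R h, map_zero]
  | add z w hz hw => simp only [map_add, hz, hw]

theorem totPert_totRight (e : E) (z : Tot k A H E) :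
    R.totPert (R.totRight e z) = R.totRight e (R.totPert z) := by
  induction z using Tot.induction_on with
  | ofX r s x =>
    simp only [totRight_ofX R e x, totPert_of_mem_column R (ofX_mem_column _), map_sum,
      ← totDl_totRight]
  | ofY s y =>
    simp only [totRight_ofY R e y, totPert_of_mem_column R (ofY_mem_column _), map_sum,
      ← totDl_totRight]
  | add z w hz hw => simp only [map_add, hz, hw]

/-- The differential of `Tot`. -/
abbrev ResData.totD : Module.End k (Tot k A H E) := R.totDl 0 + R.totPert

theorem totD_of_mem_column {s : ℕ} {z : Tot k A H E} (hz : z ∈ column k A H E s) :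
    R.totD z = ∑ l ∈ Finset.range (s + 1), R.totDl l z := by
  rw [LinearMap.add_apply, totPert_of_mem_column R hz, Finset.sum_range_succ', add_comm]

theorem totD_smul (e : E) (z : Tot k A H E) : R.totD (e • z) = e • R.totD z := by
  rw [LinearMap.add_apply, LinearMap.add_apply, totDl_smul, totPert_smul, smul_add]

theorem totD_totRight (e : E) (z : Tot k A H E) :
    R.totD (R.totRight e z) = R.totRight e (R.totD z) := by
  rw [LinearMap.add_apply, LinearMap.add_apply, totDl_totRight, totPert_totRight, map_add]

theorem totD_ofY_zero (y : Yc k H E 0) : R.totD (ofY k A 0 y) = 0 := by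
  rw [totD_of_mem_column R (ofY_mem_column y), Finset.sum_range_one, totDl_ofY R zero_ne_one]

theorem totD_ofY_succ {s : ℕ} (y : Yc k H E (s + 1)) :
    R.totD (ofY k A (s + 1) y) = ofY k A s (R.del s y) := by
  rw [totD_of_mem_column R (ofY_mem_column y), Finset.sum_eq_single_of_mem 1 (by simp)
    fun l _ hl => totDl_ofY R hl y, totDl_one_ofY_succ]

theorem totDl_ofX_xgen {l r s : ℕ} (hl : 1 ≤ l) (hls : l ≤ s) (hs : Fin s → H) (as : Fin r → A) :
    R.totDl l (ofX k A r s (xgen (1 : E) hs as (1 : E))) =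
      -∑ i ∈ Finset.range l, R.totSig (R.totDl (l - i) (R.totDl i
        (ofX k A r s (xgen (1 : E) hs as (1 : E))))) := by
  rw [totDl_ofX R (by omega)]
  match r, l, s with
  | r + 1, l, s =>
    rw [R.dl_succ l r s hl hls, map_neg, map_sum, Finset.sum_range]
    refine congr_arg _ (Finset.sum_congr rfl fun i _ => ?_)
    rw [ofX_xcast, ← totSig_ofX, ofX_xcast, ← totDl_ofX R (by omega), ofX_xcast,
      ← totDl_ofX R (by omega)]
  | 0, 1, s + 1 =>
    obtain rfl : as = fun i => i.elim0 := Subsingleton.elim _ _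
    rw [R.dl_one_zero s, map_neg, Finset.sum_range_one, totDl_zero_ofX_zero, totDl_one_ofY_succ,
      totSig_ofY]
    rfl
  | 0, l + 2, s =>
    obtain rfl : as = fun i => i.elim0 := Subsingleton.elim _ _
    rw [R.dl_zero (l + 2) s (by omega) hls, map_neg, map_sum, Finset.sum_range_succ',
      totDl_zero_ofX_zero, totDl_ofY R (by omega), map_zero, add_zero, Finset.sum_range]
    refine congr_arg _ (Finset.sum_congr rfl fun i _ => ?_)
    rw [ofX_xcast, ← totSig_ofX, ofX_xcast, ← totDl_ofX R (by omega), ofX_xcast,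
      ← totDl_ofX R (by omega)]

theorem totPert_ofX_xgen {r s : ℕ} (hs : Fin s → H) (as : Fin r → A) :
    R.totPert (ofX k A r s (xgen (1 : E) hs as (1 : E))) =
      -R.totSig (R.totPert (R.totD (ofX k A r s (xgen (1 : E) hs as (1 : E))))) := by
  have hmem := ofX_mem_column (xgen (k := k) (1 : E) hs as (1 : E))
  have h := sum_eq_of_recursion R (fun l => totDl_mem_column R l hmem)
    fun l hl hls => totDl_ofX_xgen R hl hls hs as
  rw [← totD_of_mem_column R hmem] at h
  nth_rw 1 [LinearMap.add_apply] at h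
  rwa [sub_eq_add_neg, add_right_inj] at h

theorem totD_totD_ofX_of_xgen {r s : ℕ}
    (h : ∀ (hs : Fin s → H) (as : Fin r → A),
      R.totD (R.totD (ofX k A r s (xgen (1 : E) hs as (1 : E)))) = 0)
    (x : Xc k A H E r s) : R.totD (R.totD (ofX k A r s x)) = 0 := by
  suffices h' : (R.totD * R.totD) ∘ₗ ofX k A r s = 0 from LinearMap.congr_fun h' x
  refine xgen_hom_ext fun e hs as x => ?_
  have hx : (xgen e hs as x : Xc k A H E r s) = e • rX x (xgen 1 hs as 1) := by
    simp only [← lX_apply, xgen, lX, rX, TensorProduct.map_tmul, LinearMap.mulLeft_apply,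
      LinearMap.mulRight_apply, LinearMap.id_apply, mul_one, one_mul]
  rw [LinearMap.comp_apply, Module.End.mul_apply, hx, ← smul_ofX, ← totRight_ofX R, totD_smul,
    totD_smul, totD_totRight, totD_totRight, h, map_zero, smul_zero, LinearMap.zero_apply]

theorem totD_totD (z : Tot k A H E) : R.totD (R.totD z) = 0 := by
  have hY {s : ℕ} (y : Yc k H E s) : R.totD (R.totD (ofY k A s y)) = 0 := by
    match s with
    | 0 => rw [totD_ofY_zero, map_zero]
    | 1 => rw [totD_ofY_succ, totD_ofY_zero]
    | s + 2 => rw [totD_ofY_succ, totD_ofY_succ, del_del, map_zero]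
  have hcol (s : ℕ) : column k A H E s ≤ LinearMap.ker (R.totD * R.totD) := by
    induction s using Nat.strong_induction_on with
    | _ s ih =>
      have hpert {z : Tot k A H E} (hz : z ∈ column k A H E s) :
          R.totD (R.totD (R.totPert z)) = 0 := by
        rw [totPert_of_mem_column R hz, map_sum, map_sum]
        refine Finset.sum_eq_zero fun l hl => ih (s - (l + 1)) ?_ (totDl_mem_column R (l + 1) hz)
        have := Finset.mem_range.mp hl
        omega
      have hgen {r : ℕ} (h : ∀ x, R.totD (R.totD (R.totDl 0 (ofX k A r s x))) = 0)
          (x : Xc k A H E r s) : R.totD (R.totD (ofX k A r s x)) = 0 := by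
        refine totD_totD_ofX_of_xgen R (fun hs as => ?_) x
        refine sq_eq_zero_of_pert_eq (totDl_zero_totSig_add R) (totDl_zero_totDl_zero R)
          (fun _ => eq_zero_of_add_totSig_totPert R) (totPert_ofX_xgen R hs as) ?_
        rw [LinearMap.add_apply (R.totDl 0) R.totPert (ofX _ _ _ _ _), map_add, map_add, h,
          hpert (ofX_mem_column _), add_zero]
      refine column_le (fun r x => ?_) fun y => hY y
      change R.totD (R.totD _) = 0
      induction r with
      | zero => exact hgen (fun x => by rw [totDl_zero_ofX_zero, hY]) x
      | succ r ihr => exact hgen (fun x => by rw [totDl_zero_ofX_succ, ihr]) x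
  induction z using Tot.induction_on with
  | ofX r s x => exact hcol s (ofX_mem_column x)
  | ofY s y => exact hY y
  | add z w hz hw => rw [map_add, map_add, hz, hw, add_zero]

end TotalDifferentialSquared

section TotalHomotopy

variable {k A H E : Type} [CommRing k] [Ring A] [Algebra k A] [Ring H] [HopfAlgebra k H]
  [Ring E] [Algebra k E] {S : CrossedProduct k A H E} (R : ResData k A H E S)
  (slY : ∀ l s : ℕ, Yc k H E s →ₗ[k] Xc k A H E l (s - l))
  (slX : ∀ l r s : ℕ, Xc k A H E r s →ₗ[k] Xc k A H E (r + l + 1) (s - l))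

open Tot

/-- The sum `σ` of the maps `σ^l`, a homotopy on the whole of `Tot`. -/
def totSigma : Module.End k (Tot k A H E) :=
  lift (fun r s => ∑ l ∈ Finset.range (s + 1), ofX k A (r + l + 1) (s - l) ∘ₗ slX l r s)
    (fun s => ∑ l ∈ Finset.range (s + 1), ofX k A l (s - l) ∘ₗ slY l s)

theorem totSigma_ofX {r s : ℕ} (x : Xc k A H E r s) :
    totSigma slY slX (ofX k A r s x) =
      ∑ l ∈ Finset.range (s + 1), ofX k A (r + l + 1) (s - l) (slX l r s x) := by
  rw [totSigma, lift_ofX, LinearMap.sum_apply]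
  rfl

theorem totSigma_ofY {s : ℕ} (y : Yc k H E s) :
    totSigma slY slX (ofY k A s y) =
      ∑ l ∈ Finset.range (s + 1), ofX k A l (s - l) (slY l s y) := by
  rw [totSigma, lift_ofY, LinearMap.sum_apply]
  rfl

variable {slY slX}

theorem totSigma_eq (hslY0 : ∀ s : ℕ, slY 0 s = R.sig0 s)
    (hslX0 : ∀ r s : ℕ, slX 0 r s = R.sig r s)
    (hslY : ∀ (l s : ℕ) (hl : 1 ≤ l) (hls : l ≤ s),
      slY l s = - ∑ i : Fin l,
        xcast (Nat.sub_add_cancel hl) rfl ∘ₗ R.sig (l - 1) (s - l) ∘ₗ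
          xcast (show (i : ℕ) + (l - (i : ℕ)) - 1 = l - 1 by omega)
            (show (s - (i : ℕ)) - (l - (i : ℕ)) = s - l by omega) ∘ₗ
          R.dl (l - (i : ℕ)) (i : ℕ) (s - (i : ℕ)) ∘ₗ slY (i : ℕ) s)
    (hslX : ∀ (l r s : ℕ) (_ : 1 ≤ l) (_ : l ≤ s),
      slX l r s = - ∑ i : Fin l,
        R.sig (r + l) (s - l) ∘ₗ
          xcast (show (r + (i : ℕ) + 1) + (l - (i : ℕ)) - 1 = r + l by omega)
            (show (s - (i : ℕ)) - (l - (i : ℕ)) = s - l by omega) ∘ₗ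
          R.dl (l - (i : ℕ)) (r + (i : ℕ) + 1) (s - (i : ℕ)) ∘ₗ slX (i : ℕ) r s)
    (z : Tot k A H E) :
    totSigma slY slX z = R.totSig z - R.totSig (R.totPert (totSigma slY slX z)) := by
  induction z using Tot.induction_on with
  | ofX r s x =>
    rw [totSigma_ofX, totSig_ofX, ← hslX0]
    refine sum_eq_of_recursion R (fun l => ofX_mem_column (slX l r s x)) fun l hl hls => ?_
    rw [hslX l r s hl hls, Finset.sum_range, LinearMap.neg_apply, LinearMap.sum_apply, map_neg,
      map_sum]
    refine congr_arg _ (Finset.sum_congr rfl fun i _ => ?_)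
    rw [totDl_ofX R (by omega),
      ← ofX_xcast (show r + (i : ℕ) + 1 + (l - i) - 1 = r + l by omega)
        (show s - (i : ℕ) - (l - i) = s - l by omega), totSig_ofX]
    rfl
  | ofY s y =>
    rw [totSigma_ofY, totSig_ofY, ← hslY0]
    refine sum_eq_of_recursion R (fun l => ofX_mem_column (slY l s y)) fun l hl hls => ?_
    rw [hslY l s hl hls, Finset.sum_range, LinearMap.neg_apply, LinearMap.sum_apply, map_neg,
      map_sum]
    refine congr_arg _ (Finset.sum_congr rfl fun i _ => ?_)
    simp only [LinearMap.comp_apply]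
    rw [ofX_xcast, ← totSig_ofX, ofX_xcast, ← totDl_ofX R (by omega)]
  | add z w hz hw =>
    simp only [map_add]
    nth_rw 1 [hz, hw]
    abel

variable (hσ : ∀ z, totSigma slY slX z = R.totSig z - R.totSig (R.totPert (totSigma slY slX z)))
include hσ

theorem totD_totSigma_add (z : Tot k A H E) :
    R.totD (totSigma slY slX z) + totSigma slY slX (R.totD z) = z :=
  htpy_of_pert (totDl_zero_totSig_add R) (totDl_zero_totDl_zero R)
    (fun _ => eq_zero_of_add_totSig_totPert R) (totD_totD R) hσ z

theorem totSigma_smul (e : E) (z : Tot k A H E) :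
    totSigma slY slX (e • z) = e • totSigma slY slX z := by
  refine sub_eq_zero.mp (eq_zero_of_add_totSig_totPert R ?_)
  rw [map_sub, map_sub, totPert_smul, totSig_smul, ← sub_sub_cancel (R.totSig (e • z))
    (R.totSig (R.totPert _)), ← hσ, ← sub_sub_cancel (R.totSig z) (R.totSig (R.totPert _)), ← hσ,
    totSig_smul, smul_sub]
  abel

end TotalHomotopy

section Resolution

variable {k A H E : Type} [CommRing k] [Ring A] [Algebra k A] [Ring H] [HopfAlgebra k H]
  [Ring E] [Algebra k E] {S : CrossedProduct k A H E} (R : ResData k A H E S)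

open Tot

variable (k A H E) in
/-- The inclusion of `X_{n-s,s}` in `X_n`. -/
def xtOf (n : ℕ) (s : Fin (n + 1)) : Xc k A H E (n - s) s →ₗ[k] XT k A H E n :=
  lof k (Fin (n + 1)) (fun s : Fin (n + 1) => Xc k A H E (n - s) s) s

theorem xtOf_hom_ext {M : Type} [AddCommGroup M] [Module k M] {n : ℕ} {f g : XT k A H E n →ₗ[k] M}
    (h : ∀ s x, f (xtOf k A H E n s x) = g (xtOf k A H E n s x)) : f = g :=
  DirectSum.linearMap_ext k fun s => LinearMap.ext (h s)

theorem toModule_xtOf {M : Type} [AddCommGroup M] [Module k M] {n : ℕ}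
    (φ : ∀ s : Fin (n + 1), Xc k A H E (n - s) s →ₗ[k] M) (s : Fin (n + 1))
    (x : Xc k A H E (n - s) s) :
    toModule k (Fin (n + 1)) M φ (xtOf k A H E n s x) = φ s x :=
  toModule_lof (M := fun s : Fin (n + 1) => Xc k A H E (n - s) s) k (φ := φ) s x

namespace Tot

variable (k A H E) in
/-- The inclusion of `X_n` in `Tot`. -/
def ofXT (n : ℕ) : XT k A H E n →ₗ[k] Tot k A H E :=
  toModule k (Fin (n + 1)) (Tot k A H E) fun s => ofX k A (n - s) s

theorem ofXT_xtOf {n : ℕ} {s : Fin (n + 1)} (x : Xc k A H E (n - s) s) :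
    ofXT k A H E n (xtOf k A H E n s x) = ofX k A (n - s) s x := toModule_xtOf _ s x

theorem ofXT_xtOf_xcast {n r s : ℕ} (h : r + s = n) (hr : r = n - s) (x : Xc k A H E r s) :
    ofXT k A H E n (xtOf k A H E n ⟨s, by omega⟩ (xcast hr rfl x)) = ofX k A r s x :=
  (ofXT_xtOf _).trans (ofX_xcast hr rfl x)

variable (k A H E) in
/-- The projection of `Tot` to `X_n`. -/
def projXT (n : ℕ) : Tot k A H E →ₗ[k] XT k A H E n :=
  lift (fun r s => if h : r + s = n then
      xtOf k A H E n ⟨s, by omega⟩ ∘ₗ xcast (Nat.eq_sub_of_add_eq h) rfl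
    else 0) fun _ => 0

theorem projXT_ofXT {n : ℕ} (z : XT k A H E n) : projXT k A H E n (ofXT k A H E n z) = z := by
  suffices h : projXT k A H E n ∘ₗ ofXT k A H E n = LinearMap.id from LinearMap.congr_fun h z
  refine xtOf_hom_ext fun s x => ?_
  rw [LinearMap.comp_apply, ofXT_xtOf, projXT, lift_ofX, dif_pos (by omega)]
  rfl

theorem projXT_ofY {n s : ℕ} (y : Yc k H E s) : projXT k A H E n (ofY k A s y) = 0 := by
  rw [projXT, lift_ofY]
  rfl

theorem ofXT_injective (n : ℕ) : Function.Injective (ofXT k A H E n) :=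
  Function.LeftInverse.injective projXT_ofXT

variable (k A H E) in
/-- The projection of `Tot` to `Y_s`. -/
def projY (s : ℕ) : Tot k A H E →ₗ[E] Yc k H E s :=
  DirectSum.component E ℕ (fun s => Yc k H E s) s ∘ₗ
    LinearMap.snd E (⨁ p : ℕ × ℕ, Xc k A H E p.1 p.2) (⨁ s : ℕ, Yc k H E s)

theorem projY_ofY {s : ℕ} (y : Yc k H E s) : projY k A H E s (ofY k A s y) = y :=
  DirectSum.component.lof_self k s y

theorem projY_ofX {r s m : ℕ} (x : Xc k A H E r s) : projY k A H E m (ofX k A r s x) = 0 :=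
  map_zero (DirectSum.component E ℕ (fun s => Yc k H E s) m)

theorem projY_ofXT {n m : ℕ} (z : XT k A H E n) : projY k A H E m (ofXT k A H E n z) = 0 := by
  suffices h : (projY k A H E m).restrictScalars k ∘ₗ ofXT k A H E n = 0 from
    LinearMap.congr_fun h z
  refine xtOf_hom_ext fun s x => ?_
  rw [LinearMap.comp_apply, ofXT_xtOf]
  exact projY_ofX x

theorem ofXT_lT (e : E) {n : ℕ} (z : XT k A H E n) :
    ofXT k A H E n (lT e n z) = e • ofXT k A H E n z := by
  suffices h : ofXT k A H E n ∘ₗ lT e n =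
      DistribSMul.toLinearMap k (Tot k A H E) e ∘ₗ ofXT k A H E n from LinearMap.congr_fun h z
  refine xtOf_hom_ext fun s x => ?_
  rw [LinearMap.comp_apply, LinearMap.comp_apply, lT, toModule_xtOf, ofXT_xtOf]
  exact (ofXT_xtOf _).trans ((congr_arg _ (lX_apply e x)).trans (smul_ofX e x).symm)

end Tot

theorem muT_xtOf_of_lt {n : ℕ} {s : Fin (n + 1)} (h : (s : ℕ) < n) (x : Xc k A H E (n - s) s) :
    muT R n (xtOf k A H E n s x) = 0 := by
  rw [muT, toModule_xtOf, dif_neg h.ne, LinearMap.zero_apply]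

theorem totDl_zero_ofXT_xtOf {n : ℕ} {s : Fin (n + 1)} (h : (s : ℕ) = n)
    (x : Xc k A H E (n - s) s) :
    R.totDl 0 (ofX k A (n - s) s x) = ofY k A n (muT R n (xtOf k A H E n s x)) := by
  have hr : n - s = 0 := by omega
  rw [muT, toModule_xtOf, dif_pos h, ← ofX_xcast hr h, totDl_zero_ofX_zero]
  rfl

theorem totD_ofXT_zero (z : XT k A H E 0) :
    R.totD (ofXT k A H E 0 z) = ofY k A 0 (muT R 0 z) := by
  suffices h : R.totD ∘ₗ ofXT k A H E 0 = ofY k A 0 ∘ₗ muT R 0 from LinearMap.congr_fun h z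
  refine xtOf_hom_ext fun s x => ?_
  have hs : (s : ℕ) = 0 := by omega
  rw [LinearMap.comp_apply, LinearMap.comp_apply, ofXT_xtOf,
    totD_of_mem_column R (ofX_mem_column x),
    show Finset.range (s + 1) = {0} by rw [hs, zero_add, Finset.range_one],
    Finset.sum_singleton, totDl_zero_ofXT_xtOf R hs]

theorem ofXT_dT_xtOf {n : ℕ} {s : Fin (n + 2)} (x : Xc k A H E (n + 1 - s) s) :
    ofXT k A H E n (dT R n (xtOf k A H E (n + 1) s x)) =
      ∑ l ∈ Finset.range (s + 1),
        if 0 < n + 1 - s + l then R.totDl l (ofX k A (n + 1 - s) s x) else 0 := by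
  rw [dT, toModule_xtOf, LinearMap.sum_apply, map_sum, Finset.sum_range]
  refine Finset.sum_congr rfl fun l _ => ?_
  split_ifs with h
  · rw [totDl_ofX R h]
    exact ofXT_xtOf_xcast (by omega) (by omega) _
  · rw [LinearMap.zero_apply, map_zero]

theorem totD_ofXT_succ {n : ℕ} (z : XT k A H E (n + 1)) :
    R.totD (ofXT k A H E (n + 1) z) =
      ofXT k A H E n (dT R n z) + ofY k A (n + 1) (muT R (n + 1) z) := by
  suffices h : R.totD ∘ₗ ofXT k A H E (n + 1) =
      ofXT k A H E n ∘ₗ dT R n + ofY k A (n + 1) ∘ₗ muT R (n + 1) from LinearMap.congr_fun h z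
  refine xtOf_hom_ext fun s x => ?_
  rw [LinearMap.add_apply]
  simp only [LinearMap.comp_apply]
  rw [ofXT_xtOf, totD_of_mem_column R (ofX_mem_column x), ofXT_dT_xtOf, Finset.sum_range_succ',
    Finset.sum_range_succ']
  simp only [show ∀ l, 0 < n + 1 - (s : ℕ) + (l + 1) from fun l => by omega, if_true]
  refine Eq.trans ?_ (add_assoc _ _ _).symm
  congr 1
  obtain hs | hs := (Nat.lt_succ_iff.mp s.isLt).lt_or_eq
  · rw [if_pos (by omega), muT_xtOf_of_lt R hs, map_zero, add_zero]
  · rw [if_neg (by omega), totDl_zero_ofXT_xtOf R hs, zero_add]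

theorem projY_totD_ofXT {n : ℕ} (z : XT k A H E n) :
    projY k A H E n (R.totD (ofXT k A H E n z)) = muT R n z := by
  cases n with
  | zero => rw [totD_ofXT_zero, projY_ofY]
  | succ n => rw [totD_ofXT_succ, map_add, projY_ofXT, projY_ofY, zero_add]

theorem muT_dT {n : ℕ} (z : XT k A H E (n + 1)) :
    muT R n (dT R n z) = -R.del n (muT R (n + 1) z) := by
  have h := congr_arg (projY k A H E n) (totD_totD R (ofXT k A H E (n + 1) z))
  rw [totD_ofXT_succ, map_add, map_add, projY_totD_ofXT, totD_ofY_succ, projY_ofY, map_zero] at h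
  exact eq_neg_of_add_eq_zero_left h

theorem muT_lT (e : E) {n : ℕ} (z : XT k A H E n) : muT R n (lT e n z) = e • muT R n z := by
  rw [← projY_totD_ofXT, ofXT_lT, totD_smul, map_smul, projY_totD_ofXT]

end Resolution

section ResolutionHomotopy

variable {k A H E : Type} [CommRing k] [Ring A] [Algebra k A] [Ring H] [HopfAlgebra k H]
  [Ring E] [Algebra k E] {S : CrossedProduct k A H E} (R : ResData k A H E S)
  (slY : ∀ l s : ℕ, Yc k H E s →ₗ[k] Xc k A H E l (s - l))
  (slX : ∀ l r s : ℕ, Xc k A H E r s →ₗ[k] Xc k A H E (r + l + 1) (s - l))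
  (sY : ∀ s : ℕ, Yc k H E s →ₗ[k] Yc k H E (s + 1))

open Tot

/-- The embedding `z ↦ z - σ⁻¹ μ z` of `X_n` in `Tot`. The correction term lies in the contractible
column of the `Y_s`, and makes the embedding commute with the differentials in positive degrees. -/
def ResData.embed (n : ℕ) : XT k A H E n →ₗ[k] Tot k A H E :=
  ofXT k A H E n - ofY k A (n + 1) ∘ₗ sY n ∘ₗ muT R n

theorem embed_apply {n : ℕ} (z : XT k A H E n) :
    R.embed sY n z = ofXT k A H E n z - ofY k A (n + 1) (sY n (muT R n z)) := rfl

theorem projXT_embed {n : ℕ} (z : XT k A H E n) : projXT k A H E n (R.embed sY n z) = z := by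
  rw [embed_apply, map_sub, projXT_ofXT, projXT_ofY, sub_zero]

theorem totD_embed_zero (z : XT k A H E 0) :
    R.totD (R.embed sY 0 z) = ofY k A 0 (muT R 0 z - R.del 0 (sY 0 (muT R 0 z))) := by
  rw [embed_apply, map_sub, totD_ofXT_zero, totD_ofY_succ, map_sub]

theorem projXT_totD_ofXT {n : ℕ} (z : XT k A H E (n + 1)) :
    projXT k A H E n (R.totD (ofXT k A H E (n + 1) z)) = dT R n z := by
  rw [totD_ofXT_succ, map_add, projXT_ofXT, projXT_ofY, add_zero]

theorem totSigma_ofXT_xtOf {n : ℕ} {s : Fin (n + 1)} (x : Xc k A H E (n - s) s) :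
    totSigma slY slX (ofXT k A H E n (xtOf k A H E n s x)) =
      ofXT k A H E (n + 1) (∑ l : Fin (s + 1),
        xtOf k A H E (n + 1) ⟨s - l, by omega⟩
          (xcast (show n - (s : ℕ) + l + 1 = n + 1 - (s - l) by omega) rfl
            (slX l (n - s) s x))) := by
  rw [ofXT_xtOf, totSigma_ofX, map_sum, Finset.sum_range]
  exact Finset.sum_congr rfl fun l _ => (ofXT_xtOf_xcast (by omega) (by omega) _).symm

theorem ofXT_sbar {n : ℕ} (z : XT k A H E n) :
    ofXT k A H E (n + 1) (sbar R slY slX sY n z) = totSigma slY slX (R.embed sY n z) := by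
  rw [embed_apply, map_sub, sbar, LinearMap.add_apply, LinearMap.neg_apply, map_add, map_neg,
    add_comm, ← sub_eq_add_neg]
  congr 1
  · refine LinearMap.congr_fun (f := ofXT k A H E (n + 1) ∘ₗ _)
      (g := totSigma slY slX ∘ₗ ofXT k A H E n) (xtOf_hom_ext fun s x => ?_) z
    rw [LinearMap.comp_apply, LinearMap.comp_apply, toModule_xtOf, totSigma_ofXT_xtOf,
      LinearMap.sum_apply]
    rfl
  · rw [LinearMap.comp_apply, LinearMap.sum_apply, map_sum, totSigma_ofY, Finset.sum_range]
    exact Finset.sum_congr rfl fun l _ => ofXT_xtOf_xcast (by omega) (by omega) _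

theorem ofXT_sbar0 {σm : E →ₗ[k] Yc k H E 0} (hslY0 : ∀ s : ℕ, slY 0 s = R.sig0 s) (e : E) :
    ofXT k A H E 0 (sbar0 R σm e) = totSigma slY slX (ofY k A 0 (σm e)) := by
  rw [totSigma_ofY, Finset.sum_range_one, hslY0]
  exact ofXT_xtOf (n := 0) (s := 0) _

theorem muT_sbar0 {σm : E →ₗ[k] Yc k H E 0} (e : E) : muT R 0 (sbar0 R σm e) = σm e := by
  rw [sbar0, muT]
  exact (toModule_xtOf _ _ _).trans (mu_sig0 R _)

variable {slY slX sY}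

theorem totD_embed_succ
    (hsY : ∀ {s : ℕ} (y : Yc k H E (s + 1)), sY s (R.del s y) + R.del (s + 1) (sY (s + 1) y) = y)
    {n : ℕ} (z : XT k A H E (n + 1)) :
    R.totD (R.embed sY (n + 1) z) = R.embed sY n (dT R n z) := by
  rw [embed_apply, embed_apply, map_sub, totD_ofXT_succ, totD_ofY_succ, muT_dT, map_neg, map_neg,
    sub_neg_eq_add, add_sub_assoc, ← map_sub, ← eq_sub_of_add_eq (hsY _)]

theorem embed_lT (hsY : ∀ {s : ℕ} (e : E) (y : Yc k H E s), sY s (e • y) = e • sY s y) (e : E)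
    {n : ℕ} (z : XT k A H E n) : R.embed sY n (lT e n z) = e • R.embed sY n z := by
  rw [embed_apply, embed_apply, ofXT_lT, muT_lT, hsY, smul_sub, smul_ofY]

section Contraction

variable (hσ : ∀ z, totSigma slY slX z = R.totSig z - R.totSig (R.totPert (totSigma slY slX z)))
include hσ

theorem dT_sbar {n : ℕ} (z : XT k A H E n) :
    dT R n (sbar R slY slX sY n z) =
      z - projXT k A H E n (totSigma slY slX (R.totD (R.embed sY n z))) := by
  rw [← projXT_totD_ofXT, ofXT_sbar, eq_sub_of_add_eq (totD_totSigma_add R hσ _), map_sub,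
    projXT_embed]

theorem sbar_dT_add_dT_sbar
    (hsY : ∀ {s : ℕ} (y : Yc k H E (s + 1)), sY s (R.del s y) + R.del (s + 1) (sY (s + 1) y) = y)
    {n : ℕ} (z : XT k A H E (n + 1)) :
    sbar R slY slX sY n (dT R n z) + dT R (n + 1) (sbar R slY slX sY (n + 1) z) = z := by
  rw [dT_sbar R hσ, totD_embed_succ R hsY, ← ofXT_sbar, projXT_ofXT, add_sub_cancel]

theorem sbar0_add_dT_sbar {σm : E →ₗ[k] Yc k H E 0} {mutil : Yc k H E 0 →ₗ[k] E}
    (hslY0 : ∀ s : ℕ, slY 0 s = R.sig0 s)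
    (hY : ∀ y, σm (mutil y) + R.del 0 (sY 0 y) = y) (z : XT k A H E 0) :
    sbar0 R σm (mutil (muT R 0 z)) + dT R 0 (sbar R slY slX sY 0 z) = z := by
  rw [dT_sbar R hσ, totD_embed_zero, ← eq_sub_of_add_eq (hY _), ← ofXT_sbar0 R slY slX hslY0,
    projXT_ofXT, add_sub_cancel]

theorem sbar_lT (hsY : ∀ {s : ℕ} (e : E) (y : Yc k H E s), sY s (e • y) = e • sY s y) (e : E)
    {n : ℕ} (z : XT k A H E n) :
    sbar R slY slX sY n (lT e n z) = lT e (n + 1) (sbar R slY slX sY n z) := by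
  apply ofXT_injective
  rw [ofXT_lT, ofXT_sbar, ofXT_sbar, embed_lT R hsY, totSigma_smul R hσ]

end Contraction

theorem sbar0_smul {σm : E →ₗ[k] Yc k H E 0} (hσm : ∀ e e' : E, σm (e • e') = e • σm e')
    (e e' : E) : sbar0 R σm (e • e') = lT e 0 (sbar0 R σm e') := by
  apply ofXT_injective
  rw [ofXT_lT, sbar0, LinearMap.comp_apply, LinearMap.comp_apply, hσm, sig0_smul]
  exact (ofXT_xtOf (n := 0) (s := 0) _).trans
    ((smul_ofX e _).symm.trans (congr_arg _ (ofXT_xtOf (n := 0) (s := 0) _).symm))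

theorem mutil_muT {mult : Xc k A H E 0 0 →ₗ[k] E} {mutil : Yc k H E 0 →ₗ[k] E}
    (h : ∀ x, mutil (R.mu 0 x) = -mult x) (z : XT k A H E 0) :
    mutil (muT R 0 z) = -multT mult z := by
  suffices hcomp : mutil ∘ₗ muT R 0 = -multT mult from LinearMap.congr_fun hcomp z
  refine xtOf_hom_ext fun s x => ?_
  rw [LinearMap.comp_apply, LinearMap.neg_apply, muT, multT, toModule_xtOf, toModule_xtOf,
    dif_pos (by omega)]
  exact h _

end ResolutionHomotopy

section Statement2b

variable {k A H E : Type} [CommRing k] [Ring A] [Algebra k A] [Ring H] [HopfAlgebra k H]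
  [Ring E] [Algebra k E]

/-- **Remark 1.1.2 (and the contractibility of the column `(Y_*, ∂_*)`).**
The augmented column `E ← Y₀ ← Y₁ ← ⋯`, with augmentation
`μ̃(a ⊗ (h₀ ⊗ h₁)) = -a f(h₀⁽¹⁾,h₁⁽¹⁾) # h₀⁽²⁾h₁⁽²⁾`, is contractible as a complex of
left `E`-modules with homotopy `σ⁻¹_{s+1}(x) = (-1)^s x ⊗ 1_H`.  Moreover, with the maps
`σ^l` defined recursively by
`σ^l_{r+l+1,s-l} = -∑_{i=0}^{l-1} σ⁰_{r+l+1,s-l} ∘ d^{l-i}_{r+i+1,s-i} ∘ σ^i_{r+i+1,s-i}`,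
the family `σ̄₀ = σ⁰₀₀∘σ⁻¹₀`,
`σ̄_{n+1} = -∑_{l=0}^{n+1} σ^l_{l,n-l+1}∘σ⁻¹_{n+1}∘μ_n + ∑_{r+s=n}∑_{l=0}^s σ^l_{r+l+1,s-l}`
is a contracting homotopy, by left `E`-linear maps, of the resolution of Theorem 1.1.1. -/
theorem column_contractible_and_sbar_homotopy
    (S : CrossedProduct k A H E) (R : ResData k A H E S)
    -- `μ̃ : Y₀ → E`
    (mutil : Yc k H E 0 →ₗ[k] E)
    (hmutil : ∀ (a : A) (h₀ h₁ : H) (N M' : ℕ) (u : Fin N → Fin 2 → H)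
      (v : Fin M' → Fin 2 → H), SRep k 1 h₀ N u → SRep k 1 h₁ M' v →
      mutil (ygen (S.ι (a ⊗ₜ[k] h₀)) (fun i : Fin 0 => i.elim0) h₁) =
        - ∑ i, ∑ j, S.ι ((a * S.f (u i 0) (v j 0)) ⊗ₜ[k] (u i 1 * v j 1)))
    -- `σ⁻¹₀ : E → Y₀` and `σ⁻¹_{s+1}(x) = (-1)^s x ⊗ 1_H`
    (σm : E →ₗ[k] Yc k H E 0)
    (hσm : ∀ e : E, σm e = - ygen e (fun i : Fin 0 => i.elim0) 1)
    (sY : ∀ s : ℕ, Yc k H E s →ₗ[k] Yc k H E (s + 1))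
    (hsY : ∀ (s : ℕ) (e : E) (hs : Fin s → H) (h : H),
      sY s (ygen e hs h) = ((-1 : ℤ) ^ s) • ygen e (Fin.snoc hs h) 1)
    -- the maps `σ^l`
    (slY : ∀ l s : ℕ, Yc k H E s →ₗ[k] Xc k A H E l (s - l))
    (slX : ∀ l r s : ℕ, Xc k A H E r s →ₗ[k] Xc k A H E (r + l + 1) (s - l))
    (hslY0 : ∀ s : ℕ, slY 0 s = R.sig0 s)
    (hslX0 : ∀ r s : ℕ, slX 0 r s = R.sig r s)
    (hslY : ∀ (l s : ℕ) (hl : 1 ≤ l) (hls : l ≤ s),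
      slY l s = - ∑ i : Fin l,
        xcast (show (l - 1) + 1 = l by omega) rfl ∘ₗ
          R.sig (l - 1) (s - l) ∘ₗ
          xcast
            (show (i : ℕ) + (l - (i : ℕ)) - 1 = l - 1 by have := i.isLt; omega)
            (show (s - (i : ℕ)) - (l - (i : ℕ)) = s - l by have := i.isLt; omega) ∘ₗ
          R.dl (l - (i : ℕ)) (i : ℕ) (s - (i : ℕ)) ∘ₗ slY (i : ℕ) s)
    (hslX : ∀ (l r s : ℕ) (hl : 1 ≤ l) (hls : l ≤ s),
      slX l r s = - ∑ i : Fin l,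
        R.sig (r + l) (s - l) ∘ₗ
          xcast
            (show (r + (i : ℕ) + 1) + (l - (i : ℕ)) - 1 = r + l by have := i.isLt; omega)
            (show (s - (i : ℕ)) - (l - (i : ℕ)) = s - l by have := i.isLt; omega) ∘ₗ
          R.dl (l - (i : ℕ)) (r + (i : ℕ) + 1) (s - (i : ℕ)) ∘ₗ slX (i : ℕ) r s)
    -- the augmentation `μ : X₀ → E` of the resolution of Theorem 1.1.1
    (mult : Xc k A H E 0 0 →ₗ[k] E)
    (hmult : ∀ e e' : E,
      mult (xgen e (fun i : Fin 0 => i.elim0) (fun i : Fin 0 => i.elim0) e') = e * e') :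
    -- (A) the augmented column is contractible as a complex of left `E`-modules,
    --     with the homotopy `σ⁻¹`
    (mutil ∘ₗ σm = LinearMap.id) ∧
    (σm ∘ₗ mutil + R.del 0 ∘ₗ sY 0 = LinearMap.id) ∧
    (∀ s : ℕ, sY s ∘ₗ R.del s + R.del (s + 1) ∘ₗ sY (s + 1) = LinearMap.id) ∧
    (∀ e : E, σm ∘ₗ LinearMap.mulLeft k e = lY e ∘ₗ σm) ∧
    (∀ (s : ℕ) (e : E), sY s ∘ₗ lY e = lY e ∘ₗ sY s) ∧
    -- (B) `σ̄` is a contracting homotopy, by left `E`-linear maps, of the resolution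
    ((-(multT mult)) ∘ₗ sbar0 R σm = LinearMap.id) ∧
    (sbar0 R σm ∘ₗ (-(multT mult)) + dT R 0 ∘ₗ sbar R slY slX sY 0 = LinearMap.id) ∧
    (∀ n : ℕ, sbar R slY slX sY n ∘ₗ dT R n + dT R (n + 1) ∘ₗ sbar R slY slX sY (n + 1) =
      LinearMap.id) ∧
    (∀ e : E, sbar0 R σm ∘ₗ LinearMap.mulLeft k e = lT e 0 ∘ₗ sbar0 R σm) ∧
    (∀ (n : ℕ) (e : E),
      sbar R slY slX sY n ∘ₗ lT e n = lT e (n + 1) ∘ₗ sbar R slY slX sY n) := by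
  have hdel {s : ℕ} (y : Yc k H E (s + 1)) : sY s (R.del s y) + R.del (s + 1) (sY (s + 1) y) = y :=
    sY_del_add_del_sY R hsY y
  have hcol (y : Yc k H E 0) : σm (mutil y) + R.del 0 (sY 0 y) = y :=
    σm_mutil_add_del_sY R hmutil hσm hsY y
  have hsmul {s : ℕ} (e : E) (y : Yc k H E s) : sY s (e • y) = e • sY s y := sY_smul hsY S e y
  have hmul (x : XT k A H E 0) : mutil (muT R 0 x) = -multT mult x :=
    mutil_muT R (mutil_mu R hmutil hmult) x
  have hσ := totSigma_eq R hslY0 hslX0 hslY hslX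
  refine ⟨LinearMap.ext (mutil_σm hmutil hσm), LinearMap.ext hcol, fun _ => LinearMap.ext hdel,
    fun e => LinearMap.ext (σm_smul hσm e), fun s e => LinearMap.ext fun y => ?_,
    LinearMap.ext fun e => ?_, LinearMap.ext fun x => ?_,
    fun _ => LinearMap.ext (sbar_dT_add_dT_sbar R hσ hdel),
    fun e => LinearMap.ext (sbar0_smul R (σm_smul hσm) e),
    fun _ e => LinearMap.ext (sbar_lT R hσ hsmul e)⟩
  · simp only [LinearMap.comp_apply, lY_apply, hsmul]
  · rw [LinearMap.comp_apply, LinearMap.neg_apply, ← hmul, muT_sbar0, mutil_σm hmutil hσm,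
      LinearMap.id_apply]
  · rw [LinearMap.add_apply, LinearMap.comp_apply, LinearMap.comp_apply, LinearMap.neg_apply,
      ← hmul, sbar0_add_dT_sbar R hσ hslY0 hcol, LinearMap.id_apply]

end Statement2b

end HopfCrossed
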